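/- arXiv:1311.3887 — 3 statements merged into one kernel-verified Lean document; each statement's English description precedes it below -/
import Mathlib

section
/- Let α ∈ (1,∞) and let ρ_AB be a density matrix on a bipartite space with marginal ρ_B = tr_A ρ_AB. Then the supremum over all density matrices σ_B on the B-system whose kernel is contained in the kernel of ρ_B of (1/(1−α)) · log tr(ρ_AB^α · (1_A ⊗ σ_B^{1−α})) equals (α/(1−α)) · log tr( (tr_A(ρ_AB^α))^{1/α} ), where σ_B^{1−α} is evaluated on the support of σ_B; the supremum is attained at σ_B* = (tr_A ρ_AB^α)^{1/α} / tr((tr_A ρ_AB^α)^{1/α}). -/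
open scoped Kronecker ComplexOrder
open Matrix

/-- Real power of a matrix via the functional calculus on the eigenvalues,
with the convention `0 ^ t = 0` (powers taken on the support). -/
noncomputable def matRpow {n : Type*} [Fintype n] [DecidableEq n]
    (A : Matrix n n ℂ) (t : ℝ) : Matrix n n ℂ :=
  if hA : A.IsHermitian then
    (hA.eigenvectorUnitary : Matrix n n ℂ) *
      Matrix.diagonal (fun i =>
        ((if hA.eigenvalues i = 0 then (0 : ℝ) else (hA.eigenvalues i) ^ t : ℝ) : ℂ)) *
      star (hA.eigenvectorUnitary : Matrix n n ℂ)
  else 0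

/-- Matrix logarithm on the support. -/
noncomputable def matLog {n : Type*} [Fintype n] [DecidableEq n]
    (A : Matrix n n ℂ) : Matrix n n ℂ :=
  if hA : A.IsHermitian then
    (hA.eigenvectorUnitary : Matrix n n ℂ) *
      Matrix.diagonal (fun i => ((Real.log (hA.eigenvalues i) : ℝ) : ℂ)) *
      star (hA.eigenvectorUnitary : Matrix n n ℂ)
  else 0

/-- Partial trace over the first tensor factor. -/
noncomputable def trFst {a b : Type*} [Fintype a] (M : Matrix (a × b) (a × b) ℂ) :
    Matrix b b ℂ :=
  Matrix.of fun j j' => ∑ i, M (i, j) (i, j')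

/-- Partial trace over the second tensor factor. -/
noncomputable def trSnd {a b : Type*} [Fintype b] (M : Matrix (a × b) (a × b) ℂ) :
    Matrix a a ℂ :=
  Matrix.of fun i i' => ∑ j, M (i, j) (i', j)

/-- Partial trace over the third factor of a tripartite system. -/
noncomputable def trThird {a b c : Type*} [Fintype c]
    (M : Matrix (a × b × c) (a × b × c) ℂ) : Matrix (a × b) (a × b) ℂ :=
  Matrix.of fun p p' => ∑ k, M (p.1, p.2, k) (p'.1, p'.2, k)

/-- Partial trace over the second factor of a tripartite system. -/
noncomputable def trSecond {a b c : Type*} [Fintype b]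
    (M : Matrix (a × b × c) (a × b × c) ℂ) : Matrix (a × c) (a × c) ℂ :=
  Matrix.of fun p p' => ∑ j, M (p.1, j, p.2) (p'.1, j, p'.2)

/-- Partial trace over the first two factors of a tripartite system. -/
noncomputable def trFstSnd {a b c : Type*} [Fintype a] [Fintype b]
    (M : Matrix (a × b × c) (a × b × c) ℂ) : Matrix c c ℂ :=
  Matrix.of fun k k' => ∑ i, ∑ j, M (i, j, k) (i, j, k')

/-- Partial trace over the first and third factors of a tripartite system. -/
noncomputable def trFstThird {a b c : Type*} [Fintype a] [Fintype c]
    (M : Matrix (a × b × c) (a × b × c) ℂ) : Matrix b b ℂ :=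
  Matrix.of fun j j' => ∑ i, ∑ k, M (i, j, k) (i, j', k)

/-- Quantum Rényi relative entropy `D_α(ρ‖σ)`. -/
noncomputable def renyiDiv {n : Type*} [Fintype n] [DecidableEq n]
    (α : ℝ) (ρ σ : Matrix n n ℂ) : ℝ :=
  (α - 1)⁻¹ * Real.log ((matRpow ρ α * matRpow σ (1 - α)).trace.re)

/-- Sandwiched quantum Rényi divergence `D̃_α(ρ‖σ)`. -/
noncomputable def sandwichedRenyiDiv {n : Type*} [Fintype n] [DecidableEq n]
    (α : ℝ) (ρ σ : Matrix n n ℂ) : ℝ :=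
  (α - 1)⁻¹ * Real.log
    ((matRpow (matRpow σ ((1 - α) / (2 * α)) * ρ * matRpow σ ((1 - α) / (2 * α))) α).trace.re)

/-- Quantum relative entropy `D(ρ‖σ)`. -/
noncomputable def relEntropy {n : Type*} [Fintype n] [DecidableEq n]
    (ρ σ : Matrix n n ℂ) : ℝ :=
  (ρ * (matLog ρ - matLog σ)).trace.re

/-- The scalar function underlying `matRpow`. -/
noncomputable def rpowFun (t : ℝ) (x : ℝ) : ℝ := if x = 0 then 0 else x ^ t

lemma matRpow_eq_cfc {n : Type*} [Fintype n] [DecidableEq n]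
    {A : Matrix n n ℂ} (hA : A.IsHermitian) (t : ℝ) : matRpow A t = cfc (rpowFun t) A := by
  rw [hA.cfc_eq, Matrix.IsHermitian.cfc, Unitary.conjStarAlgAut_apply, matRpow, dif_pos hA]
  rfl

lemma spectrum_nonneg' {n : Type*} [Fintype n] [DecidableEq n]
    {A : Matrix n n ℂ} (hA : A.PosSemidef) {x : ℝ} (hx : x ∈ spectrum ℝ A) : 0 ≤ x := by
  rw [hA.isHermitian.spectrum_real_eq_range_eigenvalues] at hx
  obtain ⟨i, rfl⟩ := hx
  exact hA.eigenvalues_nonneg i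

lemma matRpow_mul {n : Type*} [Fintype n] [DecidableEq n]
    {A : Matrix n n ℂ} (hA : A.PosSemidef) (s t : ℝ) :
    matRpow A s * matRpow A t = matRpow A (s + t) := by
  simp only [matRpow_eq_cfc hA.isHermitian]
  rw [← cfc_mul _ _ _ (Matrix.finite_real_spectrum.continuousOn _)
    (Matrix.finite_real_spectrum.continuousOn _)]
  apply cfc_congr
  intro x hx
  have hx0 := spectrum_nonneg' hA hx
  by_cases h : x = 0
  · simp [rpowFun, h]
  · simp only [rpowFun, h, if_false]
    rw [Real.rpow_add (lt_of_le_of_ne hx0 (Ne.symm h))]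

lemma matRpow_one {n : Type*} [Fintype n] [DecidableEq n]
    {A : Matrix n n ℂ} (hA : A.PosSemidef) : matRpow A 1 = A := by
  rw [matRpow_eq_cfc hA.isHermitian]
  have hsa : IsSelfAdjoint A := hA.isHermitian
  conv_rhs => rw [← cfc_id ℝ A hsa]
  apply cfc_congr
  intro x hx
  by_cases h : x = 0 <;> simp [rpowFun, h]

lemma matRpow_smul_matRpow {n : Type*} [Fintype n] [DecidableEq n]
    {A : Matrix n n ℂ} (hA : A.PosSemidef) {c : ℝ} (hc : 0 < c) (s t : ℝ) :
    matRpow ((c : ℂ) • matRpow A s) t = ((c ^ t : ℝ) : ℂ) • matRpow A (s * t) := by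
  have hsa : IsSelfAdjoint A := hA.isHermitian
  have h1 : (c : ℂ) • matRpow A s = cfc (fun x => c * rpowFun s x) A := by
    rw [cfc_const_mul _ _ _ (Matrix.finite_real_spectrum.continuousOn _),
      matRpow_eq_cfc hA.isHermitian]
    ext i j; simp
  have h2 : ((c ^ t : ℝ) : ℂ) • matRpow A (s * t) = cfc (fun x => c ^ t * rpowFun (s * t) x) A := by
    rw [cfc_const_mul _ _ _ (Matrix.finite_real_spectrum.continuousOn _),
      matRpow_eq_cfc hA.isHermitian]
    ext i j; simp
  have h3 : (cfc (fun x => c * rpowFun s x) A).IsHermitian :=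
    cfc_predicate (R := ℝ) (p := IsSelfAdjoint) (fun x => c * rpowFun s x) A
  rw [h1, h2, matRpow_eq_cfc h3, ← cfc_comp _ _ A hsa
    ((Matrix.finite_real_spectrum.image _).continuousOn _)
    (Matrix.finite_real_spectrum.continuousOn _)]
  apply cfc_congr
  intro x hx
  have hx0 := spectrum_nonneg' hA hx
  by_cases h : x = 0
  · simp [rpowFun, h]
  · have hp : 0 < x := lt_of_le_of_ne hx0 (Ne.symm h)
    have : c * x ^ s ≠ 0 := by positivity
    simp only [rpowFun, h, if_false, Function.comp, this]
    rw [Real.mul_rpow hc.le (by positivity), Real.rpow_mul hx0]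

lemma matRpow_posSemidef {n : Type*} [Fintype n] [DecidableEq n]
    {A : Matrix n n ℂ} (hA : A.PosSemidef) (t : ℝ) : (matRpow A t).PosSemidef := by
  rw [matRpow, dif_pos hA.isHermitian]
  refine Matrix.PosSemidef.mul_mul_conjTranspose_same ?_ _
  rw [Matrix.posSemidef_diagonal_iff]
  intro i
  have := hA.eigenvalues_nonneg i
  rw [Complex.zero_le_real]
  split_ifs
  · exact le_rfl
  · positivity

lemma matRpow_mulVec_eq_zero_iff {n : Type*} [Fintype n] [DecidableEq n]
    {A : Matrix n n ℂ} (hA : A.PosSemidef) (t : ℝ) (v : n → ℂ) :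
    matRpow A t *ᵥ v = 0 ↔ A *ᵥ v = 0 := by
  constructor
  · intro h
    have : A = matRpow A (1 - t) * matRpow A t := by
      rw [matRpow_mul hA, sub_add_cancel, matRpow_one hA]
    rw [this, ← Matrix.mulVec_mulVec, h, Matrix.mulVec_zero]
  · intro h
    have : matRpow A t = matRpow A (t - 1) * A := by
      have h' := matRpow_mul hA (t - 1) 1
      rw [matRpow_one hA, sub_add_cancel] at h'
      exact h'.symm
    rw [this, ← Matrix.mulVec_mulVec, h, Matrix.mulVec_zero]

lemma trFst_eq_sum {ι κ : Type*} [Fintype ι] (M : Matrix (ι × κ) (ι × κ) ℂ) :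
    trFst M = ∑ i, M.submatrix (Prod.mk i) (Prod.mk i) := by
  ext j j'
  simp [trFst, Matrix.sum_apply]

lemma trFst_posSemidef {ι κ : Type*} [Fintype ι] {M : Matrix (ι × κ) (ι × κ) ℂ}
    (hM : M.PosSemidef) : (trFst M).PosSemidef := by
  rw [trFst_eq_sum]
  exact Matrix.posSemidef_sum _ fun i _ => hM.submatrix _

lemma trFst_trace {ι κ : Type*} [Fintype ι] [Fintype κ] (M : Matrix (ι × κ) (ι × κ) ℂ) :
    (trFst M).trace = M.trace := by
  simp only [Matrix.trace, trFst, Matrix.diag_apply, Matrix.of_apply, Fintype.sum_prod_type]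
  exact Finset.sum_comm

lemma trace_mul_kron {ι κ : Type*} [Fintype ι] [Fintype κ] [DecidableEq ι]
    (M : Matrix (ι × κ) (ι × κ) ℂ) (X : Matrix κ κ ℂ) :
    (M * ((1 : Matrix ι ι ℂ) ⊗ₖ X)).trace = (trFst M * X).trace := by
  simp only [Matrix.trace, trFst, Matrix.diag_apply, Matrix.of_apply, Fintype.sum_prod_type,
    Matrix.mul_apply, Matrix.kroneckerMap_apply, Matrix.one_apply, ite_mul, one_mul, zero_mul,
    mul_ite, mul_zero, Finset.sum_mul]
  rw [Finset.sum_comm]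
  refine Finset.sum_congr rfl fun j _ => ?_
  refine Eq.trans ?_ Finset.sum_comm
  refine Finset.sum_congr rfl fun i _ => ?_
  rw [Finset.sum_comm]
  simp

/-- The vector `e_i ⊗ v`. -/
noncomputable def eTensor {ι κ : Type*} [DecidableEq ι] (i : ι) (v : κ → ℂ) : ι × κ → ℂ :=
  fun p => if p.1 = i then v p.2 else 0

lemma trFst_mulVec_eq_zero_iff {ι κ : Type*} [Fintype ι] [Fintype κ] [DecidableEq ι]
    {M : Matrix (ι × κ) (ι × κ) ℂ} (hM : M.PosSemidef) (v : κ → ℂ) :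
    trFst M *ᵥ v = 0 ↔ ∀ i, M *ᵥ eTensor i v = 0 := by
  have hsub : ∀ i p, (M *ᵥ eTensor i v) p = ∑ j, M p (i, j) * v j := by
    intro i p
    simp only [Matrix.mulVec, dotProduct, eTensor, Fintype.sum_prod_type, mul_ite, mul_zero]
    rw [Finset.sum_comm]
    simp
  have hq : ∀ i, star (eTensor i v) ⬝ᵥ (M *ᵥ eTensor i v)
      = star v ⬝ᵥ (M.submatrix (Prod.mk i) (Prod.mk i) *ᵥ v) := by
    intro i
    simp only [dotProduct, hsub, Fintype.sum_prod_type]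
    rw [Finset.sum_comm]
    refine Finset.sum_congr rfl fun j _ => ?_
    rw [Finset.sum_eq_single i]
    · simp [eTensor, Matrix.mulVec, dotProduct]
    · intro b _ hb; simp [eTensor, hb]
    · simp
  rw [← (trFst_posSemidef hM).dotProduct_mulVec_zero_iff, trFst_eq_sum, Matrix.sum_mulVec,
    dotProduct_sum, Finset.sum_eq_zero_iff_of_nonneg]
  · simp only [← hq, Finset.mem_univ, true_imp_iff, hM.dotProduct_mulVec_zero_iff]
  · intro i _
    rw [← hq]
    exact hM.dotProduct_mulVec_nonneg _

lemma trFst_matRpow_mulVec_eq_zero_iff {ι κ : Type*} [Fintype ι] [Fintype κ] [DecidableEq ι]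
    [DecidableEq κ] {ρ : Matrix (ι × κ) (ι × κ) ℂ} (hρ : ρ.PosSemidef) (t : ℝ) (v : κ → ℂ) :
    trFst (matRpow ρ t) *ᵥ v = 0 ↔ trFst ρ *ᵥ v = 0 := by
  rw [trFst_mulVec_eq_zero_iff (matRpow_posSemidef hρ t), trFst_mulVec_eq_zero_iff hρ]
  simp only [matRpow_mulVec_eq_zero_iff hρ]

lemma trace_conj_conj {n : Type*} [Fintype n] [DecidableEq n]
    (U V : Matrix n n ℂ) (d e : n → ℝ) :
    ((U * diagonal (fun i => (d i : ℂ)) * star U) * (V * diagonal (fun i => (e i : ℂ)) * star V)).trace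
      = ((∑ j, ∑ k, ‖(star V * U) j k‖ ^ 2 * d k * e j : ℝ) : ℂ) := by
  have h : ((U * diagonal (fun i => (d i : ℂ)) * star U) *
      (V * diagonal (fun i => (e i : ℂ)) * star V)).trace =
      (((star V * U) * diagonal (fun i => (d i : ℂ))) *
        (star (star V * U) * diagonal (fun i => (e i : ℂ)))).trace := by
    rw [← mul_assoc, Matrix.trace_mul_comm _ (star V)]
    simp only [star_mul, star_star, mul_assoc]
  rw [h]
  push_cast
  simp only [Matrix.trace, Matrix.diag_apply]
  refine Finset.sum_congr rfl fun j _ => ?_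
  rw [Matrix.mul_apply]
  refine Finset.sum_congr rfl fun k _ => ?_
  rw [Matrix.mul_diagonal, Matrix.mul_diagonal, Matrix.star_apply, ← Complex.mul_conj',
    ← starRingEnd_apply]
  ring

lemma trace_conj_diag {n : Type*} [Fintype n] [DecidableEq n]
    (U : Matrix n n ℂ) (hU : star U * U = 1) (d : n → ℝ) :
    (U * diagonal (fun i => (d i : ℂ)) * star U).trace = ((∑ k, d k : ℝ) : ℂ) := by
  rw [Matrix.trace_mul_comm, ← mul_assoc, hU, one_mul, Matrix.trace_diagonal]
  push_cast; rfl

lemma scalar_ineq {α : ℝ} (hα : 1 < α) {q s T : ℝ} (hq : 0 ≤ q) (hs : 0 < s) (hT : 0 < T) :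
    s * T ^ α + α * T ^ (α - 1) * (q ^ (1 / α) - s * T) ≤ q * s ^ (1 - α) := by
  have hα0 : α ≠ 0 := by linarith
  set y := q ^ (1 / α) with hy
  have hy0 : 0 ≤ y := by positivity
  have hqy : q = y ^ α := by
    rw [hy, ← Real.rpow_mul hq, one_div_mul_cancel hα0, Real.rpow_one]
  have hb := one_add_mul_self_le_rpow_one_add (s := y / (s * T) - 1) (p := α)
    (by have : 0 ≤ y / (s * T) := by positivity
        linarith) hα.le
  rw [add_sub_cancel, Real.div_rpow hy0 (by positivity), Real.mul_rpow hs.le hT.le] at hb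
  have hsα : 0 < s ^ α := by positivity
  have hTα : 0 < T ^ α := by positivity
  rw [hqy, Real.rpow_sub hs, Real.rpow_sub hT, Real.rpow_one, Real.rpow_one]
  have := mul_le_mul_of_nonneg_left hb (show 0 ≤ s * T ^ α by positivity)
  calc _ = s * T ^ α * (1 + α * (y / (s * T) - 1)) := by field_simp
    _ ≤ _ := this
    _ = _ := by field_simp

lemma unitary_row {n : Type*} [Fintype n] [DecidableEq n] {W : Matrix n n ℂ}
    (h : W * star W = 1) (j : n) : ∑ k, ‖W j k‖ ^ 2 = 1 := by
  have := congrFun (congrFun h j) j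
  rw [Matrix.mul_apply, Matrix.one_apply_eq] at this
  have h2 : ((∑ k, ‖W j k‖ ^ 2 : ℝ) : ℂ) = 1 := by
    rw [← this]; push_cast
    refine Finset.sum_congr rfl fun k _ => ?_
    rw [Matrix.star_apply, ← Complex.mul_conj', ← starRingEnd_apply]
  exact_mod_cast h2

lemma unitary_col {n : Type*} [Fintype n] [DecidableEq n] {W : Matrix n n ℂ}
    (h : star W * W = 1) (k : n) : ∑ j, ‖W j k‖ ^ 2 = 1 := by
  have := unitary_row (W := star W) (by simpa using h) k
  simpa [Matrix.star_apply] using this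

lemma holder_ineq {n : Type*} [Fintype n] [DecidableEq n] {α : ℝ} (hα : 1 < α)
    {Q σ : Matrix n n ℂ} (hQ : Q.PosSemidef) (hσ : σ.PosSemidef) (hσ1 : σ.trace = 1)
    (hker : ∀ v, σ *ᵥ v = 0 → Q *ᵥ v = 0)
    (hT : 0 < (matRpow Q (1 / α)).trace.re) :
    (matRpow Q (1 / α)).trace.re ^ α ≤ (Q * matRpow σ (1 - α)).trace.re := by
  set T := (matRpow Q (1 / α)).trace.re with hTdef
  have hα0 : α ≠ 0 := by linarith
  set U : Matrix n n ℂ := (hQ.isHermitian.eigenvectorUnitary : Matrix n n ℂ) with hU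
  set V : Matrix n n ℂ := (hσ.isHermitian.eigenvectorUnitary : Matrix n n ℂ) with hV
  set q := hQ.isHermitian.eigenvalues with hq
  set s := hσ.isHermitian.eigenvalues with hs
  have hUU : star U * U = 1 := Unitary.coe_star_mul_self _
  have hUU' : U * star U = 1 := Unitary.coe_mul_star_self _
  have hVV : star V * V = 1 := Unitary.coe_star_mul_self _
  have hVV' : V * star V = 1 := Unitary.coe_mul_star_self _
  have hq0 : ∀ k, 0 ≤ q k := hQ.eigenvalues_nonneg
  have hs0 : ∀ k, 0 ≤ s k := hσ.eigenvalues_nonneg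
  have hQs : Q = U * diagonal (fun i => (q i : ℂ)) * star U := by
    have := hQ.isHermitian.spectral_theorem
    rw [Unitary.conjStarAlgAut_apply] at this
    exact this
  have hσs : σ = V * diagonal (fun i => (s i : ℂ)) * star V := by
    have := hσ.isHermitian.spectral_theorem
    rw [Unitary.conjStarAlgAut_apply] at this
    exact this
  have hσp : matRpow σ (1 - α) = V * diagonal (fun i => ((rpowFun (1 - α) (s i) : ℝ) : ℂ)) * star V := by
    rw [matRpow, dif_pos hσ.isHermitian]; rfl
  have hQp : matRpow Q (1 / α) = U * diagonal (fun i => ((rpowFun (1 / α) (q i) : ℝ) : ℂ)) * star U := by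
    rw [matRpow, dif_pos hQ.isHermitian]; rfl
  have hsum_s : ∑ j, s j = 1 := by
    rw [hσs, trace_conj_diag V hVV] at hσ1
    exact_mod_cast hσ1
  have hrp : ∀ k, rpowFun (1 / α) (q k) = q k ^ (1 / α) := by
    intro k
    unfold rpowFun
    split_ifs with h
    · rw [h, Real.zero_rpow (by positivity)]
    · rfl
  have hTsum : T = ∑ k, q k ^ (1 / α) := by
    rw [hTdef, hQp, trace_conj_diag U hUU, Complex.ofReal_re]
    simp only [hrp]
  set W := star V * U with hW
  have hWW : W * star W = 1 := by
    rw [hW, star_mul, star_star, mul_assoc, ← mul_assoc U, hUU', one_mul, hVV]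
  have hWW' : star W * W = 1 := by
    rw [hW, star_mul, star_star, mul_assoc, ← mul_assoc V, hVV', one_mul, hUU]
  have hsupp : ∀ j k, s j = 0 → q k = 0 ∨ W j k = 0 := by
    intro j k hj
    have h1 : σ *ᵥ (V *ᵥ Pi.single j 1) = 0 := by
      rw [Matrix.mulVec_mulVec, hσs, mul_assoc, hVV, mul_one, ← Matrix.mulVec_mulVec,
        Matrix.diagonal_mulVec_single]
      simp [hj]
    have h2 := hker _ h1
    have h3 : (star U * Q * V) *ᵥ Pi.single j 1 = 0 := by
      rw [← Matrix.mulVec_mulVec, ← Matrix.mulVec_mulVec, h2, Matrix.mulVec_zero]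
    have h4 : star U * Q * V = diagonal (fun i => (q i : ℂ)) * star W := by
      rw [hQs, hW, star_mul, star_star]
      simp only [← mul_assoc]
      rw [hUU, one_mul]
    rw [h4] at h3
    have h5 := congrFun h3 k
    simp only [Matrix.mulVec_single_one, Matrix.col_apply, Matrix.diagonal_mul, Matrix.star_apply,
      Pi.zero_apply, mul_eq_zero, Complex.ofReal_eq_zero, star_eq_zero] at h5
    exact h5
  have hmain : (Q * matRpow σ (1 - α)).trace.re
      = ∑ j, ∑ k, ‖W j k‖ ^ 2 * q k * rpowFun (1 - α) (s j) := by
    rw [hσp]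
    conv_lhs => rw [hQs]
    rw [trace_conj_conj, Complex.ofReal_re]
  rw [hmain]
  have hpt : ∀ j k, ‖W j k‖ ^ 2 * (s j * T ^ α + α * T ^ (α - 1) * (q k ^ (1 / α) - s j * T))
      ≤ ‖W j k‖ ^ 2 * q k * rpowFun (1 - α) (s j) := by
    intro j k
    have hinv : (0 : ℝ) ^ (α⁻¹) = 0 := Real.zero_rpow (inv_ne_zero hα0)
    by_cases hj : s j = 0
    · rcases hsupp j k hj with h | h
      · simp [hj, h, rpowFun, hinv]
      · simp [h]
    · rw [mul_assoc (‖W j k‖ ^ 2)]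
      refine mul_le_mul_of_nonneg_left ?_ (sq_nonneg _)
      simp only [rpowFun, hj, if_false]
      exact scalar_ineq hα (hq0 k) (lt_of_le_of_ne (hs0 j) (Ne.symm hj)) hT
  refine le_trans (le_of_eq ?_) (Finset.sum_le_sum fun j _ => Finset.sum_le_sum fun k _ => hpt j k)
  have hA : ∑ j, ∑ k, ‖W j k‖ ^ 2 * s j = 1 := by
    simp only [← Finset.sum_mul, unitary_row hWW, one_mul, hsum_s]
  have hB : ∑ j, ∑ k, ‖W j k‖ ^ 2 * q k ^ (1 / α) = T := by
    rw [Finset.sum_comm]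
    simp only [← Finset.sum_mul, unitary_col hWW', one_mul, ← hTsum]
  have : ∀ j k, ‖W j k‖ ^ 2 * (s j * T ^ α + α * T ^ (α - 1) * (q k ^ (1 / α) - s j * T))
      = (T ^ α - α * T ^ (α - 1) * T) * (‖W j k‖ ^ 2 * s j)
        + (α * T ^ (α - 1)) * (‖W j k‖ ^ 2 * q k ^ (1 / α)) := by
    intro j k; ring
  simp only [this, Finset.sum_add_distrib, ← Finset.mul_sum, hA, hB]
  ring

theorem condRenyiUp_formula_of_one_lt {ι κ : Type*}
    [Fintype ι] [DecidableEq ι] [Fintype κ] [DecidableEq κ]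
    (α : ℝ) (hα : 1 < α)
    (ρ : Matrix (ι × κ) (ι × κ) ℂ) (hρ : ρ.PosSemidef) (hρ1 : ρ.trace = 1) :
    sSup {x : ℝ | ∃ σ : Matrix κ κ ℂ, σ.PosSemidef ∧ σ.trace = 1 ∧
        LinearMap.ker σ.mulVecLin ≤ LinearMap.ker (trFst ρ).mulVecLin ∧
        x = (1 - α)⁻¹ * Real.log
          ((matRpow ρ α * ((1 : Matrix ι ι ℂ) ⊗ₖ matRpow σ (1 - α))).trace.re)} =
      (α / (1 - α)) * Real.log ((matRpow (trFst (matRpow ρ α)) (1 / α)).trace.re) ∧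
    (1 - α)⁻¹ * Real.log
        ((matRpow ρ α * ((1 : Matrix ι ι ℂ) ⊗ₖ matRpow
          (((matRpow (trFst (matRpow ρ α)) (1 / α)).trace)⁻¹ •
            matRpow (trFst (matRpow ρ α)) (1 / α)) (1 - α))).trace.re) =
      (α / (1 - α)) * Real.log ((matRpow (trFst (matRpow ρ α)) (1 / α)).trace.re) := by
  have hα0 : α ≠ 0 := by linarith
  set M := matRpow ρ α with hM
  have hMp : M.PosSemidef := matRpow_posSemidef hρ α
  set Q := trFst M with hQdef
  have hQ : Q.PosSemidef := trFst_posSemidef hMp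
  set R := matRpow Q (1 / α) with hR
  have hRp : R.PosSemidef := matRpow_posSemidef hQ _
  have hRtr0 : R.trace ≠ 0 := by
    intro h
    rw [hRp.trace_eq_zero_iff] at h
    have hQ0 : Q = 0 := by
      have : Q = matRpow Q (1 - 1 / α) * matRpow Q (1 / α) := by
        rw [matRpow_mul hQ, sub_add_cancel, matRpow_one hQ]
      rw [this, ← hR, h, mul_zero]
    have hM0 : M = 0 := by
      rw [← hMp.trace_eq_zero_iff, ← trFst_trace, ← hQdef, hQ0, Matrix.trace_zero]
    have hρ0 : ρ = 0 := by
      have : ρ = matRpow ρ (1 - α) * matRpow ρ α := by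
        rw [matRpow_mul hρ, sub_add_cancel, matRpow_one hρ]
      rw [this, ← hM, hM0, mul_zero]
    rw [hρ0, Matrix.trace_zero] at hρ1
    exact zero_ne_one hρ1
  have hRnn : 0 ≤ R.trace := hRp.trace_nonneg
  obtain ⟨hre, him⟩ := Complex.nonneg_iff.mp hRnn
  set T := R.trace.re with hTdef
  have hTc : R.trace = (T : ℂ) := by
    apply Complex.ext
    · simp [hTdef]
    · simp [← him]
  have hT : 0 < T := by
    refine lt_of_le_of_ne hre fun h => hRtr0 ?_
    rw [hTc, ← h, Complex.ofReal_zero]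
  have hTinv : (R.trace)⁻¹ = ((T⁻¹ : ℝ) : ℂ) := by rw [hTc, Complex.ofReal_inv]
  have hopt : (M * ((1 : Matrix ι ι ℂ) ⊗ₖ matRpow ((R.trace)⁻¹ • R) (1 - α))).trace.re = T ^ α := by
    rw [trace_mul_kron, ← hQdef, hTinv, hR, matRpow_smul_matRpow hQ (inv_pos.mpr hT),
      Matrix.mul_smul, Matrix.trace_smul]
    have h1 : Q * matRpow Q (1 / α * (1 - α)) = R := by
      have h' := matRpow_mul hQ 1 (1 / α * (1 - α))
      rw [matRpow_one hQ] at h'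
      rw [h', hR]
      congr 1
      field_simp
      ring
    rw [h1, hTc, smul_eq_mul, ← Complex.ofReal_mul, Complex.ofReal_re, Real.inv_rpow hT.le,
      ← Real.rpow_neg hT.le]
    nth_rewrite 2 [← Real.rpow_one T]
    rw [← Real.rpow_add hT]
    congr 1
    ring
  have hval : (1 - α)⁻¹ * Real.log (T ^ α) = (α / (1 - α)) * Real.log T := by
    rw [Real.log_rpow hT]; ring
  have hsecond : (1 - α)⁻¹ * Real.log
      ((M * ((1 : Matrix ι ι ℂ) ⊗ₖ matRpow ((R.trace)⁻¹ • R) (1 - α))).trace.re)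
      = (α / (1 - α)) * Real.log T := by rw [hopt, hval]
  refine ⟨IsGreatest.csSup_eq ⟨?_, ?_⟩, hsecond⟩
  · refine ⟨(R.trace)⁻¹ • R, ?_, ?_, ?_, hsecond.symm⟩
    · refine hRp.smul ?_
      rw [hTinv, Complex.zero_le_real]
      positivity
    · rw [Matrix.trace_smul, smul_eq_mul, inv_mul_cancel₀ hRtr0]
    · intro v hv
      rw [LinearMap.mem_ker, Matrix.mulVecLin_apply] at hv ⊢
      rw [Matrix.smul_mulVec, smul_eq_zero] at hv
      rcases hv with hv | hv
      · exact absurd hv (inv_ne_zero hRtr0)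
      · rw [hR, matRpow_mulVec_eq_zero_iff hQ, hQdef, hM,
          trFst_matRpow_mulVec_eq_zero_iff hρ] at hv
        exact hv
  · rintro x ⟨σ, hσ, hσ1, hker, rfl⟩
    rw [← hval]
    refine mul_le_mul_of_nonpos_left ?_ (inv_nonpos.mpr (by linarith))
    refine Real.log_le_log (by positivity) ?_
    rw [trace_mul_kron, ← hQdef]
    refine holder_ineq hα hQ hσ hσ1 (fun v hv => ?_) hT
    rw [hQdef, hM, trFst_matRpow_mulVec_eq_zero_iff hρ]
    have := hker (show v ∈ LinearMap.ker σ.mulVecLin by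
      rw [LinearMap.mem_ker, Matrix.mulVecLin_apply]; exact hv)
    rwa [LinearMap.mem_ker, Matrix.mulVecLin_apply] at this
end

section
/- Duality for H^↓: Let ρ_ABC = ψψ* be a pure density matrix on ℂ^(A×B×C) and let α, β ∈ (0,2) with α + β = 2 and α ≠ 1. Then H_α^↓(A|B)_ρ + H_β^↓(A|C)_ρ = 0, i.e. −D_α(ρ_AB ‖ 1_A ⊗ ρ_B) = D_β(ρ_AC ‖ 1_A ⊗ ρ_C). -/
open scoped Kronecker ComplexOrder
open Matrix

lemma matRpow_eq_aeval {n : Type*} [Fintype n] [DecidableEq n] {M : Matrix n n ℂ}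
    (hM : M.IsHermitian) (t : ℝ) (p : Polynomial ℂ)
    (hp : ∀ i, p.eval ((hM.eigenvalues i : ℝ) : ℂ) =
      ((if hM.eigenvalues i = 0 then (0 : ℝ) else (hM.eigenvalues i) ^ t : ℝ) : ℂ)) :
    matRpow M t = Polynomial.aeval M p := by
  have key : ∀ q : Polynomial ℂ, Polynomial.aeval M q =
      (hM.eigenvectorUnitary : Matrix n n ℂ) *
      Matrix.diagonal (fun i => q.eval ((hM.eigenvalues i : ℝ) : ℂ)) *
      star (hM.eigenvectorUnitary : Matrix n n ℂ) := by
    intro q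
    induction q using Polynomial.induction_on' with
    | add p q hp hq =>
      rw [map_add, hp, hq, ← add_mul, ← mul_add, Matrix.diagonal_add]
      simp
    | monomial k a =>
      have hs := hM.spectral_theorem
      rw [Unitary.conjStarAlgAut_apply] at hs
      have hpow : ∀ k : ℕ, M ^ k = (hM.eigenvectorUnitary : Matrix n n ℂ) *
          Matrix.diagonal (fun i => ((hM.eigenvalues i : ℝ) : ℂ) ^ k) *
          star (hM.eigenvectorUnitary : Matrix n n ℂ) := by
        intro k
        induction k with
        | zero =>
          simp
        | succ k ih =>
          rw [pow_succ, ih]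
          nth_rewrite 4 [hs]
          have hu : star (hM.eigenvectorUnitary : Matrix n n ℂ) *
            (hM.eigenvectorUnitary : Matrix n n ℂ) = 1 := by simp
          rw [← mul_assoc, ← mul_assoc, mul_assoc _ (star _) _, hu, mul_one,
            mul_assoc _ (Matrix.diagonal _) (Matrix.diagonal _), Matrix.diagonal_mul_diagonal]
          rfl
      rw [Polynomial.aeval_monomial, hpow, ← mul_assoc, ← mul_assoc]
      simp only [Polynomial.eval_monomial]
      rw [Algebra.commutes, mul_assoc _ (algebraMap _ _ _), Matrix.algebraMap_eq_diagonal, Matrix.diagonal_mul_diagonal]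
      rfl
  rw [key, matRpow, dif_pos hM]
  simp only [hp]

lemma exists_poly {n m : Type*} [Fintype n] [DecidableEq n] [Fintype m] [DecidableEq m]
    {M : Matrix n n ℂ} {N : Matrix m m ℂ}
    (hM : M.IsHermitian) (hN : N.IsHermitian) (t : ℝ) :
    ∃ p : Polynomial ℂ, matRpow M t = Polynomial.aeval M p ∧
      matRpow N t = Polynomial.aeval N p := by
  classical
  let S : Finset ℝ := Finset.univ.image hM.eigenvalues ∪ Finset.univ.image hN.eigenvalues
  let p : Polynomial ℂ := Lagrange.interpolate S (fun x : ℝ => (x : ℂ))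
    (fun x : ℝ => ((if x = 0 then (0 : ℝ) else x ^ t : ℝ) : ℂ))
  have hp : ∀ x ∈ S, p.eval (x : ℂ) = ((if x = 0 then (0 : ℝ) else x ^ t : ℝ) : ℂ) := by
    intro x hx
    exact Lagrange.eval_interpolate_at_node (v := fun x : ℝ => (x : ℂ)) _
      (Complex.ofReal_injective.injOn) hx
  refine ⟨p, matRpow_eq_aeval hM t p fun i => hp _ ?_, matRpow_eq_aeval hN t p fun i => hp _ ?_⟩
  · simp [S]
  · simp [S]

lemma matRpow_transpose {n : Type*} [Fintype n] [DecidableEq n] {M : Matrix n n ℂ}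
    (hM : M.IsHermitian) (t : ℝ) : matRpow Mᵀ t = (matRpow M t)ᵀ := by
  obtain ⟨p, h1, h2⟩ := exists_poly hM hM.transpose t
  rw [h1, h2]
  clear h1 h2
  induction p using Polynomial.induction_on' with
  | add p q hp hq => rw [map_add, map_add, hp, hq, Matrix.transpose_add]
  | monomial k a =>
    rw [Polynomial.aeval_monomial, Polynomial.aeval_monomial, ← Algebra.smul_def,
      ← Algebra.smul_def, Matrix.transpose_smul, Matrix.transpose_pow]

lemma matRpow_one_kronecker {m n : Type*} [Fintype n] [DecidableEq n] [Fintype m] [DecidableEq m]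
    {M : Matrix n n ℂ} (hM : M.IsHermitian) (t : ℝ) :
    matRpow ((1 : Matrix m m ℂ) ⊗ₖ M) t = (1 : Matrix m m ℂ) ⊗ₖ matRpow M t := by
  have hN : ((1 : Matrix m m ℂ) ⊗ₖ M).IsHermitian := by
    rw [Matrix.IsHermitian, Matrix.conjTranspose_kronecker, hM.eq, Matrix.conjTranspose_one]
  obtain ⟨p, h1, h2⟩ := exists_poly hM hN t
  rw [h1, h2]
  have hpow : ∀ k : ℕ, ((1 : Matrix m m ℂ) ⊗ₖ M) ^ k = (1 : Matrix m m ℂ) ⊗ₖ (M ^ k) := by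
    intro k
    induction k with
    | zero => simp
    | succ k ih => rw [pow_succ, ih, ← Matrix.mul_kronecker_mul, one_mul, pow_succ]
  clear h1 h2
  induction p using Polynomial.induction_on' with
  | add p q hp hq => rw [map_add, map_add, hp, hq, Matrix.kronecker_add]
  | monomial k a =>
    rw [Polynomial.aeval_monomial, Polynomial.aeval_monomial, hpow, ← Algebra.smul_def,
      ← Algebra.smul_def, Matrix.kronecker_smul]

lemma matRpow_mul_comm {m n : Type*} [Fintype n] [DecidableEq n] [Fintype m] [DecidableEq m]
    (X : Matrix m n ℂ) (t : ℝ) :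
    matRpow (X * Xᴴ) t * X = X * matRpow (Xᴴ * X) t := by
  obtain ⟨p, h1, h2⟩ := exists_poly (Matrix.isHermitian_mul_conjTranspose_self X)
    (Matrix.isHermitian_conjTranspose_mul_self X) t
  rw [h1, h2]
  have hpow : ∀ k : ℕ, (X * Xᴴ) ^ k * X = X * (Xᴴ * X) ^ k := by
    intro k
    induction k with
    | zero => simp
    | succ k ih =>
      rw [pow_succ', Matrix.mul_assoc, ih, pow_succ']
      simp only [Matrix.mul_assoc]
  clear h1 h2
  induction p using Polynomial.induction_on' with
  | add p q hp hq => rw [map_add, map_add, Matrix.add_mul, Matrix.mul_add, hp, hq]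
  | monomial k a =>
    rw [Polynomial.aeval_monomial, Polynomial.aeval_monomial, ← Algebra.smul_def,
      ← Algebra.smul_def, Matrix.smul_mul, Matrix.mul_smul, hpow]

lemma matRpow_succ {n : Type*} [Fintype n] [DecidableEq n] {M : Matrix n n ℂ}
    (hM : M.PosSemidef) (t : ℝ) : matRpow M t = matRpow M (t - 1) * M := by
  have hs := hM.isHermitian.spectral_theorem
  rw [Unitary.conjStarAlgAut_apply] at hs
  nth_rewrite 3 [hs]
  rw [matRpow, matRpow, dif_pos hM.isHermitian, dif_pos hM.isHermitian]
  have hu : star (hM.isHermitian.eigenvectorUnitary : Matrix n n ℂ) *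
    (hM.isHermitian.eigenvectorUnitary : Matrix n n ℂ) = 1 := by simp
  rw [← mul_assoc, ← mul_assoc, mul_assoc _ (star _) _, hu, mul_one,
    mul_assoc _ (Matrix.diagonal _) (Matrix.diagonal _), Matrix.diagonal_mul_diagonal]
  congr 3
  funext i
  have h0 := hM.eigenvalues_nonneg i
  by_cases h : hM.isHermitian.eigenvalues i = 0
  · simp [h]
  · have hpos := lt_of_le_of_ne h0 (Ne.symm h)
    simp only [h, if_false, Function.comp]
    have h3 : hM.isHermitian.eigenvalues i ^ t
      = hM.isHermitian.eigenvalues i ^ (t - 1) * hM.isHermitian.eigenvalues i := by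
      rw [Real.rpow_sub_one h, div_mul_cancel₀ _ h]
    rw [h3]
    push_cast
    rfl

lemma matRpow_mul_conjTranspose {m n : Type*} [Fintype n] [DecidableEq n] [Fintype m]
    [DecidableEq m] (X : Matrix m n ℂ) (t : ℝ) :
    matRpow (X * Xᴴ) t = X * (matRpow (Xᴴ * X)ᵀ (t - 1))ᵀ * Xᴴ := by
  rw [matRpow_transpose (Matrix.isHermitian_conjTranspose_mul_self X), Matrix.transpose_transpose,
    ← matRpow_mul_comm, matRpow_succ (Matrix.posSemidef_self_mul_conjTranspose X),
    Matrix.mul_assoc]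

theorem duality_down {A B C : Type*}
    [Fintype A] [DecidableEq A] [Fintype B] [DecidableEq B] [Fintype C] [DecidableEq C]
    (ψ : A × B × C → ℂ) (hψ : star ψ ⬝ᵥ ψ = 1)
    (α β : ℝ) (hα : α ∈ Set.Ioo (0 : ℝ) 2) (hβ : β ∈ Set.Ioo (0 : ℝ) 2)
    (hab : α + β = 2) (hα1 : α ≠ 1) :
    -(renyiDiv α (trThird (vecMulVec ψ (star ψ)))
        ((1 : Matrix A A ℂ) ⊗ₖ trFst (trThird (vecMulVec ψ (star ψ))))) +
    -(renyiDiv β (trSecond (vecMulVec ψ (star ψ)))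
        ((1 : Matrix A A ℂ) ⊗ₖ trFstSnd (vecMulVec ψ (star ψ)))) = 0 := by
  have hXAB : trThird (vecMulVec ψ (star ψ)) =
      (Matrix.of fun (p : A × B) (c : C) => ψ (p.1, p.2, c)) *
      (Matrix.of fun (p : A × B) (c : C) => ψ (p.1, p.2, c))ᴴ := by
    ext p q
    simp [trThird, Matrix.mul_apply, vecMulVec_apply]
  have hXC : trFstSnd (vecMulVec ψ (star ψ)) =
      ((Matrix.of fun (p : A × B) (c : C) => ψ (p.1, p.2, c))ᴴ *
      (Matrix.of fun (p : A × B) (c : C) => ψ (p.1, p.2, c)))ᵀ := by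
    ext p q
    simp [trFstSnd, Matrix.mul_apply, vecMulVec_apply, Fintype.sum_prod_type, mul_comm]
  have hYAC : trSecond (vecMulVec ψ (star ψ)) =
      (Matrix.of fun (p : A × C) (b : B) => ψ (p.1, b, p.2)) *
      (Matrix.of fun (p : A × C) (b : B) => ψ (p.1, b, p.2))ᴴ := by
    ext p q
    simp [trSecond, Matrix.mul_apply, vecMulVec_apply]
  have hYB : trFst (trThird (vecMulVec ψ (star ψ))) =
      ((Matrix.of fun (p : A × C) (b : B) => ψ (p.1, b, p.2))ᴴ *
      (Matrix.of fun (p : A × C) (b : B) => ψ (p.1, b, p.2)))ᵀ := by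
    ext p q
    simp [trFst, trThird, Matrix.mul_apply, vecMulVec_apply, Fintype.sum_prod_type, mul_comm]
  have hC : (trFstSnd (vecMulVec ψ (star ψ))).IsHermitian := by
    rw [hXC]; exact (Matrix.isHermitian_conjTranspose_mul_self _).transpose
  have hB : (trFst (trThird (vecMulVec ψ (star ψ)))).IsHermitian := by
    rw [hYB]; exact (Matrix.isHermitian_conjTranspose_mul_self _).transpose
  have hAB := matRpow_mul_conjTranspose
    (Matrix.of fun (p : A × B) (c : C) => ψ (p.1, p.2, c)) α
  have hAC := matRpow_mul_conjTranspose
    (Matrix.of fun (p : A × C) (b : B) => ψ (p.1, b, p.2)) β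
  rw [← hXAB, ← hXC] at hAB
  rw [← hYAC, ← hYB] at hAC
  have e1 : β - 1 = 1 - α := by linarith
  have e2 : 1 - β = α - 1 := by linarith
  have key : (matRpow (trThird (vecMulVec ψ (star ψ))) α *
      matRpow ((1 : Matrix A A ℂ) ⊗ₖ trFst (trThird (vecMulVec ψ (star ψ)))) (1 - α)).trace =
      (matRpow (trSecond (vecMulVec ψ (star ψ))) β *
      matRpow ((1 : Matrix A A ℂ) ⊗ₖ trFstSnd (vecMulVec ψ (star ψ))) (1 - β)).trace := by
    rw [matRpow_one_kronecker hB, matRpow_one_kronecker hC, hAB, hAC, e1, e2]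
    generalize matRpow (trFstSnd (vecMulVec ψ (star ψ))) (α - 1) = G
    generalize matRpow (trFst (trThird (vecMulVec ψ (star ψ)))) (1 - α) = H
    have hL : ((Matrix.of fun (p : A × B) (c : C) => ψ (p.1, p.2, c)) * Gᵀ *
        (Matrix.of fun (p : A × B) (c : C) => ψ (p.1, p.2, c))ᴴ *
        ((1 : Matrix A A ℂ) ⊗ₖ H)).trace =
        ∑ a, ∑ b, ∑ b', ∑ c', ∑ c,
          ψ (a, b, c) * G c' c * star (ψ (a, b', c')) * H b' b := by
      simp [Matrix.trace, Matrix.mul_apply, Fintype.sum_prod_type, Matrix.one_apply,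
        Finset.sum_mul]
    have hR : ((Matrix.of fun (p : A × C) (b : B) => ψ (p.1, b, p.2)) * Hᵀ *
        (Matrix.of fun (p : A × C) (b : B) => ψ (p.1, b, p.2))ᴴ *
        ((1 : Matrix A A ℂ) ⊗ₖ G)).trace =
        ∑ a, ∑ c, ∑ c', ∑ b', ∑ b,
          ψ (a, b, c) * H b' b * star (ψ (a, b', c')) * G c' c := by
      simp [Matrix.trace, Matrix.mul_apply, Fintype.sum_prod_type, Matrix.one_apply,
        Finset.sum_mul]
    rw [hL, hR]
    refine Finset.sum_congr rfl fun a _ => ?_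
    simp only [← Fintype.sum_prod_type']
    refine Fintype.sum_equiv
      ⟨fun x => (x.2.2.2, x.2.2.1, x.2.1, x.1), fun x => (x.2.2.2, x.2.2.1, x.2.1, x.1),
        fun _ => rfl, fun _ => rfl⟩ _ _ fun x => ?_
    simp only [Equiv.coe_fn_mk]
    ring
  unfold renyiDiv
  rw [key, e1, ← neg_sub α 1, inv_neg]
  ring
end

section
/- Let ρ_AB be a density matrix on a bipartite space and α ∈ [1/2,1)∪(1,∞). Then H_α^↓(A|B)_ρ ≤ H̃_α^↓(A|B)_ρ ≤ H^↓_{2−1/α}(A|B)_ρ, where H_γ^↓(A|B)_ρ := −D_γ(ρ_AB ‖ 1_A ⊗ ρ_B) and H̃_γ^↓(A|B)_ρ := −D̃_γ(ρ_AB ‖ 1_A ⊗ ρ_B). -/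
open scoped Kronecker ComplexOrder
open Matrix

section Helpers

open scoped Matrix.Norms.L2Operator

variable {n : Type*} [Fintype n] [DecidableEq n]

/-- Complex power on positive reals, zero elsewhere. -/
noncomputable def gpow (z : ℂ) (x : ℝ) : ℂ :=
  if x ≤ 0 then 0 else Complex.exp (z * (Real.log x : ℂ))

/-- Real power on positive reals, zero elsewhere. -/
noncomputable def rpw (t : ℝ) (x : ℝ) : ℝ := if x ≤ 0 then 0 else x ^ t

lemma gpow_ofReal (t x : ℝ) : gpow (t : ℂ) x = (rpw t x : ℂ) := by
  unfold gpow rpw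
  split_ifs with h
  · simp
  · rw [Real.rpow_def_of_pos (not_le.mp h)]
    push_cast
    rw [mul_comm]

lemma gpow_add (z w : ℂ) (x : ℝ) : gpow z x * gpow w x = gpow (z + w) x := by
  unfold gpow
  split_ifs with h
  · simp
  · rw [← Complex.exp_add, add_mul]

lemma gpow_star (z : ℂ) (x : ℝ) : star (gpow z x) = gpow (star z) x := by
  unfold gpow
  split_ifs with h
  · simp
  · simp only [Complex.star_def]
    rw [← Complex.exp_conj]
    simp

lemma norm_gpow (z : ℂ) (x : ℝ) : ‖gpow z x‖ = rpw z.re x := by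
  unfold gpow rpw
  split_ifs with h
  · simp
  · rw [Complex.norm_exp, Real.rpow_def_of_pos (not_le.mp h)]
    simp [mul_comm]

lemma rpw_nonneg (t x : ℝ) : 0 ≤ rpw t x := by
  unfold rpw
  split_ifs with h
  · simp
  · exact Real.rpow_nonneg (not_le.mp h).le _

lemma rpw_pos (t : ℝ) {x : ℝ} (hx : 0 < x) : 0 < rpw t x := by
  unfold rpw
  rw [if_neg (not_le.mpr hx)]
  exact Real.rpow_pos_of_pos hx _

/-- Complex power of a Hermitian matrix, on the positive part of the spectrum. -/
noncomputable def cpw {A : Matrix n n ℂ} (hA : A.IsHermitian) (z : ℂ) : Matrix n n ℂ :=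
  (hA.eigenvectorUnitary : Matrix n n ℂ) *
    Matrix.diagonal (fun i => gpow z (hA.eigenvalues i)) *
    (hA.eigenvectorUnitary : Matrix n n ℂ)ᴴ

lemma UhU {A : Matrix n n ℂ} (hA : A.IsHermitian) :
    (hA.eigenvectorUnitary : Matrix n n ℂ)ᴴ * (hA.eigenvectorUnitary : Matrix n n ℂ) = 1 :=
  Unitary.coe_star_mul_self hA.eigenvectorUnitary

lemma UUh {A : Matrix n n ℂ} (hA : A.IsHermitian) :
    (hA.eigenvectorUnitary : Matrix n n ℂ) * (hA.eigenvectorUnitary : Matrix n n ℂ)ᴴ = 1 :=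
  Unitary.coe_mul_star_self hA.eigenvectorUnitary

lemma cpw_mul {A : Matrix n n ℂ} (hA : A.IsHermitian) (z w : ℂ) :
    cpw hA z * cpw hA w = cpw hA (z + w) := by
  unfold cpw
  set U := (hA.eigenvectorUnitary : Matrix n n ℂ) with hU
  have h1 : Uᴴ * U = 1 := UhU hA
  calc _ = U * diagonal (fun i => gpow z (hA.eigenvalues i)) * (Uᴴ * U) *
        diagonal (fun i => gpow w (hA.eigenvalues i)) * Uᴴ := by simp only [Matrix.mul_assoc]
    _ = _ := by
      rw [h1, Matrix.mul_one, Matrix.mul_assoc U, diagonal_mul_diagonal]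
      simp only [gpow_add]

lemma cpw_conjTranspose {A : Matrix n n ℂ} (hA : A.IsHermitian) (z : ℂ) :
    (cpw hA z)ᴴ = cpw hA (star z) := by
  unfold cpw
  simp only [conjTranspose_mul, conjTranspose_conjTranspose, diagonal_conjTranspose,
    Matrix.mul_assoc]
  congr 3
  funext i
  exact gpow_star z _

lemma cpw_trace {A : Matrix n n ℂ} (hA : A.IsHermitian) (z : ℂ) :
    (cpw hA z).trace = ∑ i, gpow z (hA.eigenvalues i) := by
  unfold cpw
  rw [Matrix.trace_mul_comm, ← Matrix.mul_assoc, UhU, Matrix.one_mul, Matrix.trace_diagonal]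

lemma cpw_trace_re {A : Matrix n n ℂ} (hA : A.IsHermitian) (t : ℝ) :
    (cpw hA (t : ℂ)).trace = ((∑ i, rpw t (hA.eigenvalues i) : ℝ) : ℂ) := by
  rw [cpw_trace]
  push_cast
  simp only [gpow_ofReal]

lemma matRpow_eq {A : Matrix n n ℂ} (hA : A.PosSemidef) (t : ℝ) :
    matRpow A t = cpw hA.1 (t : ℂ) := by
  unfold matRpow cpw
  rw [dif_pos hA.1]
  congr 3
  funext i
  rw [gpow_ofReal]
  have := hA.eigenvalues_nonneg i
  unfold rpw
  congr 1
  split_ifs with h1 h2 h2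
  · rfl
  · exact absurd h1.le h2
  · exact absurd (le_antisymm h2 this) h1
  · rfl

lemma cpw_one {A : Matrix n n ℂ} (hA : A.PosSemidef) : cpw hA.1 1 = A := by
  conv_rhs => rw [hA.1.spectral_theorem, Unitary.conjStarAlgAut_apply]
  unfold cpw
  rw [star_eq_conjTranspose]
  congr 3
  funext i
  have h1 : (1 : ℂ) = ((1 : ℝ) : ℂ) := by simp
  rw [h1, gpow_ofReal]
  have := hA.eigenvalues_nonneg i
  unfold rpw
  split_ifs with h
  · simp [le_antisymm h this]
  · simp

lemma norm_unitary_le {A : Matrix n n ℂ} (hA : A.IsHermitian) :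
    ‖(hA.eigenvectorUnitary : Matrix n n ℂ)‖ ≤ 1 := by
  have h := l2_opNorm_conjTranspose_mul_self (hA.eigenvectorUnitary : Matrix n n ℂ)
  rw [UhU] at h
  have h1 : ‖(1 : Matrix n n ℂ)‖ ≤ 1 := by
    rw [← diagonal_one, l2_opNorm_diagonal]
    exact (pi_norm_le_iff_of_nonneg zero_le_one).mpr (fun i => by simp)
  nlinarith [norm_nonneg (hA.eigenvectorUnitary : Matrix n n ℂ)]

lemma norm_mul_le_one {A B : Matrix n n ℂ} (hA : ‖A‖ ≤ 1) (hB : ‖B‖ ≤ 1) : ‖A * B‖ ≤ 1 :=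
  (l2_opNorm_mul A B).trans (mul_le_one₀ hA (norm_nonneg _) hB)

lemma norm_cpw_le {A : Matrix n n ℂ} (hA : A.IsHermitian) {z : ℂ} (hz : z.re = 0) :
    ‖cpw hA z‖ ≤ 1 := by
  unfold cpw
  refine norm_mul_le_one (norm_mul_le_one (norm_unitary_le hA) ?_) ?_
  · rw [l2_opNorm_diagonal]
    refine (pi_norm_le_iff_of_nonneg zero_le_one).mpr (fun i => ?_)
    rw [norm_gpow, hz]
    unfold rpw
    split_ifs <;> simp
  · rw [l2_opNorm_conjTranspose]
    exact norm_unitary_le hA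

lemma col_sum_le {W : Matrix n n ℂ} (hW : ‖W‖ ≤ 1) (j : n) : ∑ i, ‖W i j‖ ^ 2 ≤ 1 := by
  have h := l2_opNorm_mulVec W (EuclideanSpace.single j (1 : ℂ))
  rw [EuclideanSpace.norm_single, norm_one, mul_one] at h
  have h2 := h.trans hW
  rw [EuclideanSpace.norm_eq] at h2
  have h3 := Real.sqrt_le_one.mp h2
  refine le_trans (le_of_eq ?_) h3
  refine Finset.sum_congr rfl (fun i _ => ?_)
  simp [EuclideanSpace.equiv]

lemma row_sum_le {W : Matrix n n ℂ} (hW : ‖W‖ ≤ 1) (i : n) : ∑ j, ‖W i j‖ ^ 2 ≤ 1 := by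
  have := col_sum_le (W := Wᴴ) (by rwa [l2_opNorm_conjTranspose]) i
  simpa [conjTranspose_apply] using this

lemma entry_le {W : Matrix n n ℂ} (hW : ‖W‖ ≤ 1) (i j : n) : ‖W i j‖ ≤ 1 := by
  have h1 := col_sum_le hW j
  have h2 : ‖W i j‖ ^ 2 ≤ ∑ i, ‖W i j‖ ^ 2 :=
    Finset.single_le_sum (f := fun i => ‖W i j‖ ^ 2) (fun i _ => by positivity) (Finset.mem_univ i)
  nlinarith [norm_nonneg (W i j)]

/-- `|tr(S W)| ≤ tr S`. -/
lemma trace_bound_one {A W : Matrix n n ℂ} (hA : A.IsHermitian) (hW : ‖W‖ ≤ 1) (t : ℝ) :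
    ‖(cpw hA (t : ℂ) * W).trace‖ ≤ ∑ i, rpw t (hA.eigenvalues i) := by
  set U := (hA.eigenvectorUnitary : Matrix n n ℂ) with hU
  have e : (cpw hA (t : ℂ) * W).trace =
      (diagonal (fun i => gpow t (hA.eigenvalues i)) * (Uᴴ * W * U)).trace := by
    unfold cpw
    rw [Matrix.mul_assoc, Matrix.mul_assoc, Matrix.trace_mul_comm, Matrix.mul_assoc,
      Matrix.mul_assoc]
  have hW2 : ‖Uᴴ * W * U‖ ≤ 1 := by
    refine norm_mul_le_one (norm_mul_le_one ?_ hW) (norm_unitary_le hA)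
    rw [l2_opNorm_conjTranspose]; exact norm_unitary_le hA
  rw [e, Matrix.trace]
  refine (norm_sum_le _ _).trans (Finset.sum_le_sum fun i _ => ?_)
  rw [diag_apply, diagonal_mul, norm_mul, norm_gpow]
  exact mul_le_of_le_one_right (rpw_nonneg _ _) (entry_le hW2 i i)

/-- Young-type trace bound. -/
lemma trace_bound_two {A B W V : Matrix n n ℂ} (hA : A.IsHermitian) (hB : B.IsHermitian)
    (hW : ‖W‖ ≤ 1) (hV : ‖V‖ ≤ 1) (s t p q w v : ℝ) (hw : 0 ≤ w) (hv : 0 ≤ v)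
    (hy : ∀ x y : ℝ, rpw s x * rpw t y ≤ w * rpw p x + v * rpw q y) :
    ‖(cpw hA (s : ℂ) * W * cpw hB (t : ℂ) * V).trace‖ ≤
      w * ∑ i, rpw p (hA.eigenvalues i) + v * ∑ i, rpw q (hB.eigenvalues i) := by
  set U := (hA.eigenvectorUnitary : Matrix n n ℂ) with hU
  set U' := (hB.eigenvectorUnitary : Matrix n n ℂ) with hU'
  have e : (cpw hA (s : ℂ) * W * cpw hB (t : ℂ) * V).trace =
      (diagonal (fun i => gpow s (hA.eigenvalues i)) * (Uᴴ * W * U') *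
        (diagonal (fun i => gpow t (hB.eigenvalues i)) * (U'ᴴ * V * U))).trace := by
    unfold cpw
    rw [← hU, ← hU']
    generalize (diagonal fun i => gpow (s : ℂ) (hA.eigenvalues i)) = D
    generalize (diagonal fun i => gpow (t : ℂ) (hB.eigenvalues i)) = D'
    have : U * D * Uᴴ * W * (U' * D' * U'ᴴ) * V = U * (D * Uᴴ * W * (U' * D' * U'ᴴ) * V) := by
      simp only [Matrix.mul_assoc]
    rw [this, Matrix.trace_mul_comm]
    simp only [Matrix.mul_assoc]
  have hUn : ‖U‖ ≤ 1 := norm_unitary_le hA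
  have hUn' : ‖U'‖ ≤ 1 := norm_unitary_le hB
  have hUc : ‖Uᴴ‖ ≤ 1 := (l2_opNorm_conjTranspose U).le.trans hUn
  have hUc' : ‖U'ᴴ‖ ≤ 1 := (l2_opNorm_conjTranspose U').le.trans hUn'
  clear_value U U'
  have hW2 : ‖Uᴴ * W * U'‖ ≤ 1 := norm_mul_le_one (norm_mul_le_one hUc hW) hUn'
  have hV2 : ‖U'ᴴ * V * U‖ ≤ 1 := norm_mul_le_one (norm_mul_le_one hUc' hV) hUn
  rw [e]
  generalize Uᴴ * W * U' = W2 at hW2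
  generalize U'ᴴ * V * U = V2 at hV2
  set a := hA.eigenvalues
  set b := hB.eigenvalues
  have hX : ∀ i, ∑ j, (‖W2 i j‖ ^ 2 + ‖V2 j i‖ ^ 2) / 2 ≤ 1 := by
    intro i
    rw [← Finset.sum_div, Finset.sum_add_distrib]
    linarith [row_sum_le hW2 i, col_sum_le hV2 i]
  have hY : ∀ j, ∑ i, (‖W2 i j‖ ^ 2 + ‖V2 j i‖ ^ 2) / 2 ≤ 1 := by
    intro j
    rw [← Finset.sum_div, Finset.sum_add_distrib]
    linarith [col_sum_le hW2 j, row_sum_le hV2 j]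
  calc _ ≤ ∑ i, ∑ j, (‖W2 i j‖ ^ 2 + ‖V2 j i‖ ^ 2) / 2 * (w * rpw p (a i) + v * rpw q (b j)) := by
        rw [Matrix.trace]
        refine (norm_sum_le _ _).trans (Finset.sum_le_sum fun i _ => ?_)
        rw [diag_apply, Matrix.mul_apply]
        refine (norm_sum_le _ _).trans (Finset.sum_le_sum fun j _ => ?_)
        rw [diagonal_mul, diagonal_mul, norm_mul, norm_mul, norm_mul, norm_gpow, norm_gpow]
        simp only [Complex.ofReal_re]
        calc _ = (‖W2 i j‖ * ‖V2 j i‖) * (rpw s (a i) * rpw t (b j)) := by ring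
          _ ≤ _ := by
            refine mul_le_mul ?_ (hy _ _) (mul_nonneg (rpw_nonneg _ _) (rpw_nonneg _ _))
              (by positivity)
            nlinarith [sq_nonneg (‖W2 i j‖ - ‖V2 j i‖)]
    _ = w * ∑ i, (∑ j, (‖W2 i j‖ ^ 2 + ‖V2 j i‖ ^ 2) / 2) * rpw p (a i) +
        v * ∑ j, (∑ i, (‖W2 i j‖ ^ 2 + ‖V2 j i‖ ^ 2) / 2) * rpw q (b j) := by
        simp only [mul_add, Finset.sum_add_distrib, Finset.mul_sum, Finset.sum_mul]
        congr 1
        · exact Finset.sum_congr rfl fun i _ => Finset.sum_congr rfl fun j _ => by ring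
        · rw [Finset.sum_comm]
          exact Finset.sum_congr rfl fun i _ => Finset.sum_congr rfl fun j _ => by ring
    _ ≤ _ := by
        gcongr with i _ j _
        · exact mul_le_of_le_one_left (rpw_nonneg _ _) (hX i)
        · exact mul_le_of_le_one_left (rpw_nonneg _ _) (hY j)

lemma polar_supp (K : Matrix n n ℂ) :
    K * cpw (posSemidef_conjTranspose_mul_self K).1 0 = K := by
  set hY := posSemidef_conjTranspose_mul_self K
  set Q := cpw hY.1 0 with hQ
  have hQh : Qᴴ = Q := by rw [hQ, cpw_conjTranspose]; simp
  have h1 : Kᴴ * K * Q = Kᴴ * K := by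
    conv_lhs => rw [← cpw_one hY, hQ, cpw_mul]
    rw [add_zero, cpw_one hY]
  have h2 : (K - K * Q)ᴴ * (K - K * Q) = 0 := by
    rw [conjTranspose_sub, conjTranspose_mul, hQh]
    have : (Kᴴ - Q * Kᴴ) * (K - K * Q) =
        (Kᴴ * K - Kᴴ * K * Q) - Q * (Kᴴ * K - Kᴴ * K * Q) := by
      noncomm_ring
    rw [this, h1]
    simp
  have h3 := conjTranspose_mul_self_eq_zero.mp h2
  exact (sub_eq_zero.mp h3).symm

lemma polar_norm (K : Matrix n n ℂ) :
    ‖K * cpw (posSemidef_conjTranspose_mul_self K).1 (-1 / 2)‖ ≤ 1 := by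
  set hY := posSemidef_conjTranspose_mul_self K
  have h := l2_opNorm_conjTranspose_mul_self (K * cpw hY.1 (-1 / 2))
  have e : (K * cpw hY.1 (-1 / 2))ᴴ * (K * cpw hY.1 (-1 / 2)) = cpw hY.1 0 := by
    rw [conjTranspose_mul, cpw_conjTranspose]
    have : cpw hY.1 (star (-1 / 2)) * Kᴴ * (K * cpw hY.1 (-1 / 2)) =
      cpw hY.1 (star (-1 / 2)) * (Kᴴ * K) * cpw hY.1 (-1 / 2) := by simp only [Matrix.mul_assoc]
    rw [this]
    conv_lhs => enter [1, 2]; rw [← cpw_one hY]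
    rw [cpw_mul, cpw_mul]
    congr 1
    simp
    norm_num
  rw [e] at h
  have h2 := norm_cpw_le hY.1 (z := 0) (by simp)
  nlinarith [norm_nonneg (K * cpw hY.1 (-1 / 2))]

/-- Entrywise entire and bounded on the closed unit strip. -/
def GoodFam (f : ℂ → Matrix n n ℂ) : Prop :=
  (∀ i j, Differentiable ℂ (fun z => f z i j)) ∧
    ∃ C : ℝ, 0 ≤ C ∧ ∀ z : ℂ, 0 ≤ z.re → z.re ≤ 1 → ∀ i j, ‖f z i j‖ ≤ C

lemma GoodFam.const (M : Matrix n n ℂ) : GoodFam (fun _ => M) := by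
  refine ⟨fun i j => differentiable_const _, ∑ i, ∑ j, ‖M i j‖, by positivity, fun z _ _ i j => ?_⟩
  calc ‖M i j‖ ≤ ∑ j, ‖M i j‖ :=
        Finset.single_le_sum (f := fun j => ‖M i j‖) (fun _ _ => norm_nonneg _) (Finset.mem_univ j)
    _ ≤ _ := Finset.single_le_sum (f := fun i => ∑ j, ‖M i j‖)
        (fun _ _ => Finset.sum_nonneg fun _ _ => norm_nonneg _) (Finset.mem_univ i)

lemma GoodFam.mul {f g : ℂ → Matrix n n ℂ} (hf : GoodFam f) (hg : GoodFam g) :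
    GoodFam (fun z => f z * g z) := by
  obtain ⟨hf1, C, hC, hf2⟩ := hf
  obtain ⟨hg1, D, hD, hg2⟩ := hg
  refine ⟨fun i j => ?_, ∑ _k : n, C * D, by positivity, fun z h0 h1 i j => ?_⟩
  · simp only [Matrix.mul_apply]
    exact Differentiable.fun_sum fun k _ => (hf1 i k).mul (hg1 k j)
  · change ‖(f z * g z) i j‖ ≤ _
    rw [Matrix.mul_apply]
    refine (norm_sum_le _ _).trans (Finset.sum_le_sum fun k _ => ?_)
    rw [norm_mul]
    exact mul_le_mul (hf2 z h0 h1 i k) (hg2 z h0 h1 k j) (norm_nonneg _) hC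

lemma GoodFam.cpw {A : Matrix n n ℂ} (hA : A.IsHermitian) (a b : ℝ) :
    GoodFam (fun z => cpw hA (a * z + b)) := by
  unfold _root_.cpw
  refine GoodFam.mul (GoodFam.mul (GoodFam.const _) ?_) (GoodFam.const _)
  refine ⟨fun i j => ?_, ∑ i, Real.exp ((|a| + |b|) * |Real.log (hA.eigenvalues i)|),
    by positivity, fun z h0 h1 i j => ?_⟩
  · by_cases hij : i = j
    · subst hij
      simp only [diagonal_apply_eq]
      unfold gpow
      split_ifs
      · exact differentiable_const _
      · fun_prop
    · simp only [diagonal_apply_ne _ hij]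
      exact differentiable_const _
  · have hs : Real.exp ((|a| + |b|) * |Real.log (hA.eigenvalues i)|) ≤
        ∑ i, Real.exp ((|a| + |b|) * |Real.log (hA.eigenvalues i)|) :=
      Finset.single_le_sum (f := fun i => Real.exp ((|a| + |b|) * |Real.log (hA.eigenvalues i)|))
        (fun _ _ => (Real.exp_pos _).le) (Finset.mem_univ i)
    refine le_trans ?_ hs
    beta_reduce
    by_cases hij : i = j
    · subst hij
      rw [diagonal_apply_eq]
      unfold gpow
      split_ifs
      · simp only [norm_zero]; positivity
      · rw [Complex.norm_exp]
        refine Real.exp_le_exp.mpr ?_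
        have : (((a : ℂ) * z + b) * (Real.log (hA.eigenvalues i) : ℂ)).re =
            (a * z.re + b) * Real.log (hA.eigenvalues i) := by simp
        rw [this]
        refine (le_abs_self _).trans ?_
        rw [abs_mul]
        refine mul_le_mul_of_nonneg_right ?_ (abs_nonneg _)
        refine (abs_add_le _ _).trans ?_
        rw [abs_mul, abs_of_nonneg h0]
        nlinarith [abs_nonneg a]
    · rw [diagonal_apply_ne _ hij]
      simp only [norm_zero]; positivity

lemma GoodFam.three_lines {f : ℂ → Matrix n n ℂ} (hf : GoodFam f) {M0 M1 u : ℝ}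
    (hu0 : 0 ≤ u) (hu1 : u ≤ 1)
    (h0 : ∀ z : ℂ, z.re = 0 → ‖(f z).trace‖ ≤ M0) (h1 : ∀ z : ℂ, z.re = 1 → ‖(f z).trace‖ ≤ M1) :
    ‖(f u).trace‖ ≤ M0 ^ (1 - u) * M1 ^ u := by
  obtain ⟨hd, C, hC, hb⟩ := hf
  have hD : Differentiable ℂ (fun z => (f z).trace) := by
    unfold Matrix.trace
    exact Differentiable.fun_sum fun i _ => hd i i
  have := Complex.HadamardThreeLines.norm_le_interp_of_mem_verticalClosedStrip'
    (f := fun z => (f z).trace) (z := (u : ℂ)) (a := M0) (b := M1) (l := 0) (u := 1)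
    zero_lt_one (by simp [Complex.HadamardThreeLines.verticalClosedStrip, hu0, hu1])
    hD.diffContOnCl ?_ (fun z hz => h0 z (by simpa using hz)) (fun z hz => h1 z (by simpa using hz))
  · simpa using this
  · refine ⟨∑ _i : n, C, ?_⟩
    rintro _ ⟨z, hz, rfl⟩
    simp only [Complex.HadamardThreeLines.verticalClosedStrip, Set.mem_preimage, Set.mem_Icc] at hz
    simp only [Function.comp_apply, Matrix.trace]
    exact (norm_sum_le _ _).trans (Finset.sum_le_sum fun i _ => hb z hz.1 hz.2 i i)

lemma young_rpw {m u : ℝ} (hm : 1 ≤ m) (hu : 0 < u) (x y : ℝ) :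
    rpw (1 / 2) x * rpw ((m - 1) / (2 * u)) y ≤
      (1 / m) * rpw (m / 2) x + (1 - 1 / m) * rpw (m / (2 * u)) y := by
  have hm0 : 0 < m := by linarith
  have hw : 1 / m ≤ 1 := by rw [div_le_one hm0]; exact hm
  have hR : 0 ≤ (1 / m) * rpw (m / 2) x + (1 - 1 / m) * rpw (m / (2 * u)) y :=
    add_nonneg (mul_nonneg (by positivity) (rpw_nonneg _ _))
      (mul_nonneg (by linarith) (rpw_nonneg _ _))
  by_cases hx : x ≤ 0
  · refine le_trans (le_of_eq ?_) hR
    unfold rpw; simp [hx]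
  by_cases hy : y ≤ 0
  · refine le_trans (le_of_eq ?_) hR
    unfold rpw; simp [hy]
  have hx' := not_le.mp hx
  have hy' := not_le.mp hy
  unfold rpw
  simp only [hx, hy, if_false]
  have := Real.geom_mean_le_arith_mean2_weighted (w₁ := 1 / m) (w₂ := 1 - 1 / m)
    (p₁ := x ^ (m / 2)) (p₂ := y ^ (m / (2 * u))) (by positivity) (by linarith)
    (by positivity) (by positivity) (by ring)
  rw [← Real.rpow_mul hx'.le, ← Real.rpow_mul hy'.le] at this
  have e1 : m / 2 * (1 / m) = 1 / 2 := by field_simp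
  have e2 : m / (2 * u) * (1 - 1 / m) = (m - 1) / (2 * u) := by field_simp
  rwa [e1, e2] at this

/-- Araki–Lieb–Thirring type inequality. -/
lemma alt_ineq {A B : Matrix n n ℂ} (hA : A.IsHermitian) (hB : B.IsHermitian) (c d u m : ℝ)
    (hu0 : 0 < u) (hu1 : u ≤ 1) (hm : 1 ≤ m) (K L : Matrix n n ℂ)
    (hK : K = cpw hA ((d * u : ℝ) : ℂ) * cpw hB ((c * u : ℝ) : ℂ))
    (hL : L = cpw hA (d : ℂ) * cpw hB (c : ℂ)) :
    ∑ i, rpw (m / (2 * u)) ((posSemidef_conjTranspose_mul_self K).1.eigenvalues i) ≤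
      ∑ i, rpw (m / 2) ((posSemidef_conjTranspose_mul_self L).1.eigenvalues i) := by
  have hKn := polar_norm K
  have hLn := polar_norm L
  have hLs := polar_supp L
  set hY := posSemidef_conjTranspose_mul_self K
  set hZ := posSemidef_conjTranspose_mul_self L
  set T := ∑ i, rpw (m / (2 * u)) (hY.1.eigenvalues i) with hT
  set S := ∑ i, rpw (m / 2) (hZ.1.eigenvalues i) with hS
  have hT0 : 0 ≤ T := Finset.sum_nonneg fun _ _ => rpw_nonneg _ _
  have hS0 : 0 ≤ S := Finset.sum_nonneg fun _ _ => rpw_nonneg _ _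
  have hu : (u : ℂ) ≠ 0 := by exact_mod_cast hu0.ne'
  have hm0 : 0 < m := by linarith
  have hw : 1 / m ≤ 1 := by rw [div_le_one hm0]; exact hm
  set V := cpw hY.1 (-1 / 2) * Kᴴ with hV
  have hVn : ‖V‖ ≤ 1 := by
    have : V = (K * cpw hY.1 (-1 / 2))ᴴ := by
      rw [conjTranspose_mul, cpw_conjTranspose, hV]
      congr 2
      simp
    rw [this, l2_opNorm_conjTranspose]
    exact hKn
  set F : ℂ → Matrix n n ℂ := fun z =>
    cpw hA ((d : ℝ) * z + (0 : ℝ)) * cpw hB ((c : ℝ) * z + (0 : ℝ)) *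
      cpw hY.1 (((-1 / (2 * u) : ℝ) : ℂ) * z + ((m / (2 * u) - 1 / 2 : ℝ) : ℂ)) * Kᴴ with hF
  have hG : GoodFam F :=
    (((GoodFam.cpw hA d 0).mul (GoodFam.cpw hB c 0)).mul (GoodFam.cpw hY.1 _ _)).mul
      (GoodFam.const _)
  have hFu : (F u).trace = (T : ℂ) := by
    have e1 : F u = K * cpw hY.1 ((m / (2 * u) - 1 : ℝ) : ℂ) * Kᴴ := by
      rw [hF]
      simp only
      have a1 : (d : ℂ) * u + ((0 : ℝ) : ℂ) = ((d * u : ℝ) : ℂ) := by push_cast; ring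
      have a2 : (c : ℂ) * u + ((0 : ℝ) : ℂ) = ((c * u : ℝ) : ℂ) := by push_cast; ring
      rw [a1, a2, ← hK]
      congr 3
      push_cast
      field_simp
      ring
    rw [e1, Matrix.trace_mul_comm, ← Matrix.mul_assoc]
    conv_lhs => enter [1, 1]; rw [← cpw_one hY]
    rw [cpw_mul]
    have : (1 : ℂ) + ((m / (2 * u) - 1 : ℝ) : ℂ) = ((m / (2 * u) : ℝ) : ℂ) := by
      push_cast; ring
    rw [this, cpw_trace_re]
  have h0 : ∀ z : ℂ, z.re = 0 → ‖(F z).trace‖ ≤ T := by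
    intro z hz
    have e1 : (F z).trace = (cpw hY.1 ((m / (2 * u) : ℝ) : ℂ) *
        (cpw hY.1 (((-1 / (2 * u) : ℝ) : ℂ) * z) * V *
        (cpw hA ((d : ℝ) * z + (0 : ℝ)) * cpw hB ((c : ℝ) * z + (0 : ℝ))))).trace := by
      have : cpw hY.1 (((-1 / (2 * u) : ℝ) : ℂ) * z + ((m / (2 * u) - 1 / 2 : ℝ) : ℂ)) =
          cpw hY.1 ((m / (2 * u) : ℝ) : ℂ) * cpw hY.1 (((-1 / (2 * u) : ℝ) : ℂ) * z) *
            cpw hY.1 (-1 / 2) := by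
        rw [cpw_mul, cpw_mul]
        congr 1
        push_cast
        ring
      rw [hF]
      simp only
      rw [this, Matrix.mul_assoc, Matrix.trace_mul_comm]
      simp only [hV, Matrix.mul_assoc]
    rw [e1]
    refine trace_bound_one hY.1 ?_ _
    refine norm_mul_le_one (norm_mul_le_one (norm_cpw_le _ ?_) hVn)
      (norm_mul_le_one (norm_cpw_le _ ?_) (norm_cpw_le _ ?_))
    · rw [Complex.re_ofReal_mul, hz, mul_zero]
    · simp [hz]
    · simp [hz]
  have h1 : ∀ z : ℂ, z.re = 1 → ‖(F z).trace‖ ≤ (1 / m) * S + (1 - 1 / m) * T := by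
    intro z hz
    have e1 : (F z).trace = (cpw hZ.1 ((1 / 2 : ℝ) : ℂ) * cpw hB (c * (z - 1)) *
        cpw hY.1 (((m - 1) / (2 * u) : ℝ) : ℂ) *
        (cpw hY.1 (((-1 / (2 * u) : ℝ) : ℂ) * (z - 1)) * V * (cpw hA (d * (z - 1)) *
          (L * cpw hZ.1 (-1 / 2))))).trace := by
      have a1 : cpw hY.1 (((-1 / (2 * u) : ℝ) : ℂ) * z + ((m / (2 * u) - 1 / 2 : ℝ) : ℂ)) =
          cpw hY.1 (((m - 1) / (2 * u) : ℝ) : ℂ) * cpw hY.1 (((-1 / (2 * u) : ℝ) : ℂ) * (z - 1)) *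
            cpw hY.1 (-1 / 2) := by
        rw [cpw_mul, cpw_mul]
        congr 1
        push_cast
        field_simp
        ring
      have a2 : cpw hA ((d : ℝ) * z + (0 : ℝ)) = cpw hA (d * (z - 1)) * cpw hA d := by
        rw [cpw_mul]; congr 1; push_cast; ring
      have a3 : cpw hB ((c : ℝ) * z + (0 : ℝ)) = cpw hB c * cpw hB (c * (z - 1)) := by
        rw [cpw_mul]; congr 1; push_cast; ring
      have a4 : L = L * cpw hZ.1 (-1 / 2) * cpw hZ.1 ((1 / 2 : ℝ) : ℂ) := by
        rw [Matrix.mul_assoc, cpw_mul]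
        conv_lhs => rw [← hLs]
        congr 2
        push_cast; ring
      have a5 : cpw hA ((d : ℝ) * z + (0 : ℝ)) * cpw hB ((c : ℝ) * z + (0 : ℝ)) =
          cpw hA (d * (z - 1)) * (L * cpw hZ.1 (-1 / 2) * cpw hZ.1 ((1 / 2 : ℝ) : ℂ)) *
            cpw hB (c * (z - 1)) := by
        rw [← a4, a2, a3, hL]
        simp only [Matrix.mul_assoc]
      rw [hF]
      simp only
      rw [a1, a5, Matrix.trace_mul_comm (cpw hZ.1 ((1 / 2 : ℝ) : ℂ) * cpw hB (c * (z - 1)) *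
        cpw hY.1 (((m - 1) / (2 * u) : ℝ) : ℂ))]
      rw [hV]
      have cyc : ∀ a l p h b q r s k : Matrix n n ℂ,
          (a * (l * p * h) * b * (q * r * s) * k).trace =
            (r * (s * k) * (a * (l * p)) * (h * b * q)).trace := by
        intro a l p h b q r s k
        have x1 : a * (l * p * h) * b * (q * r * s) * k =
          (a * (l * p) * (h * b * q)) * (r * (s * k)) := by simp only [Matrix.mul_assoc]
        rw [x1, Matrix.trace_mul_comm]
        simp only [Matrix.mul_assoc]
      exact cyc _ _ _ _ _ _ _ _ _
    rw [e1]
    have hz1 : (z - 1).re = 0 := by simp [hz]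
    refine trace_bound_two hZ.1 hY.1 (norm_cpw_le _ ?_) ?_ _ _ _ _ _ _ (by positivity)
      (by linarith) (young_rpw hm hu0)
    · rw [Complex.re_ofReal_mul, hz1, mul_zero]
    · refine norm_mul_le_one (norm_mul_le_one (norm_cpw_le _ ?_) hVn)
        (norm_mul_le_one (norm_cpw_le _ ?_) hLn)
      · rw [Complex.re_ofReal_mul, hz1, mul_zero]
      · rw [Complex.re_ofReal_mul, hz1, mul_zero]
  have h3 := hG.three_lines hu0.le hu1 h0 h1
  rw [hFu, Complex.norm_real, Real.norm_of_nonneg hT0] at h3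
  by_contra hlt
  push Not at hlt
  have hTp : 0 < T := lt_of_le_of_lt hS0 hlt
  have hm1 : 0 < 1 / m := by positivity
  have h4 : (1 / m) * S + (1 - 1 / m) * T < T := by nlinarith
  have h5 : ((1 / m) * S + (1 - 1 / m) * T) ^ u < T ^ u :=
    Real.rpow_lt_rpow (add_nonneg (by positivity) (mul_nonneg (by linarith) hT0)) h4 hu0
  have h6 : T ^ (1 - u) * T ^ u = T := by
    rw [← Real.rpow_add hTp]; simp
  have h7 : T ^ (1 - u) * ((1 / m) * S + (1 - 1 / m) * T) ^ u < T ^ (1 - u) * T ^ u :=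
    mul_lt_mul_of_pos_left h5 (Real.rpow_pos_of_pos hTp _)
  linarith

lemma trace_two {A B : Matrix n n ℂ} (hA : A.IsHermitian) (hB : B.IsHermitian) (s t : ℝ) :
    (cpw hA (s : ℂ) * cpw hB (t : ℂ)).trace =
      ((∑ i, ∑ j, ‖((hA.eigenvectorUnitary : Matrix n n ℂ)ᴴ *
        (hB.eigenvectorUnitary : Matrix n n ℂ)) i j‖ ^ 2 *
        (rpw s (hA.eigenvalues i) * rpw t (hB.eigenvalues j)) : ℝ) : ℂ) := by
  unfold cpw
  set U := (hA.eigenvectorUnitary : Matrix n n ℂ)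
  set U' := (hB.eigenvectorUnitary : Matrix n n ℂ)
  set D := (diagonal fun i => gpow (s : ℂ) (hA.eigenvalues i)) with hD
  set D' := (diagonal fun i => gpow (t : ℂ) (hB.eigenvalues i)) with hD'
  have e : U * D * Uᴴ * (U' * D' * U'ᴴ) = U * (D * Uᴴ * (U' * D' * U'ᴴ)) := by
    simp only [Matrix.mul_assoc]
  have e2 : D * Uᴴ * (U' * D' * U'ᴴ) * U = (D * (Uᴴ * U')) * (D' * (Uᴴ * U')ᴴ) := by
    simp only [Matrix.mul_assoc, conjTranspose_mul, conjTranspose_conjTranspose]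
  rw [e, Matrix.trace_mul_comm, e2, Matrix.trace]
  push_cast
  refine Finset.sum_congr rfl fun i _ => ?_
  rw [diag_apply, Matrix.mul_apply]
  refine Finset.sum_congr rfl fun j _ => ?_
  rw [hD, hD', diagonal_mul, diagonal_mul, conjTranspose_apply, gpow_ofReal, gpow_ofReal]
  have : ((‖(Uᴴ * U') i j‖ : ℂ)) ^ 2 = (Uᴴ * U') i j * star ((Uᴴ * U') i j) := by
    rw [Complex.star_def, Complex.mul_conj, Complex.normSq_eq_norm_sq]
    push_cast; rfl
  rw [this]
  ring

lemma overlap_row {A B : Matrix n n ℂ} (hA : A.IsHermitian) (hB : B.IsHermitian) (i : n) :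
    ∑ j, ‖((hA.eigenvectorUnitary : Matrix n n ℂ)ᴴ *
        (hB.eigenvectorUnitary : Matrix n n ℂ)) i j‖ ^ 2 = 1 := by
  have h1 := UhU hA
  have h2 := UUh hB
  set U := (hA.eigenvectorUnitary : Matrix n n ℂ)
  set U' := (hB.eigenvectorUnitary : Matrix n n ℂ)
  have h : (Uᴴ * U') * (Uᴴ * U')ᴴ = 1 := by
    calc (Uᴴ * U') * (Uᴴ * U')ᴴ = Uᴴ * (U' * U'ᴴ) * U := by
          simp only [Matrix.mul_assoc, conjTranspose_mul, conjTranspose_conjTranspose]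
      _ = 1 := by rw [h2, Matrix.mul_one, h1]
  have h3 := congrFun (congrFun h i) i
  rw [Matrix.mul_apply, Matrix.one_apply_eq] at h3
  have h4 : ((∑ j, ‖(Uᴴ * U') i j‖ ^ 2 : ℝ) : ℂ) = ((1 : ℝ) : ℂ) := by
    rw [Complex.ofReal_one, ← h3]
    push_cast
    refine Finset.sum_congr rfl fun j _ => ?_
    rw [conjTranspose_apply, Complex.star_def, Complex.mul_conj, Complex.normSq_eq_norm_sq]
    push_cast; rfl
  exact_mod_cast h4

lemma overlap_col {A B : Matrix n n ℂ} (hA : A.IsHermitian) (hB : B.IsHermitian) (j : n) :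
    ∑ i, ‖((hA.eigenvectorUnitary : Matrix n n ℂ)ᴴ *
        (hB.eigenvectorUnitary : Matrix n n ℂ)) i j‖ ^ 2 = 1 := by
  rw [← overlap_row hB hA j]
  refine Finset.sum_congr rfl fun i _ => ?_
  rw [← norm_star, ← conjTranspose_apply, conjTranspose_mul, conjTranspose_conjTranspose]

/-- Eigenvalue symmetry. -/
lemma swap_sum (K : Matrix n n ℂ) (p : ℝ) :
    ∑ i, rpw p ((posSemidef_self_mul_conjTranspose K).1.eigenvalues i) =
      ∑ i, rpw p ((posSemidef_conjTranspose_mul_self K).1.eigenvalues i) := by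
  have : (posSemidef_self_mul_conjTranspose K).1.eigenvalues =
      (posSemidef_conjTranspose_mul_self K).1.eigenvalues :=
    (Matrix.IsHermitian.eigenvalues_eq_eigenvalues_iff _ _).mpr (charpoly_mul_comm _ _)
  rw [this]

lemma q_eq {A B : Matrix n n ℂ} (hA : A.IsHermitian) (hB : B.IsHermitian) (s t : ℝ)
    (L : Matrix n n ℂ) (hL : L = cpw hA (s : ℂ) * cpw hB (t : ℂ)) :
    (cpw hA ((2 * s : ℝ) : ℂ) * cpw hB ((2 * t : ℝ) : ℂ)).trace =
      ((∑ i, rpw 1 ((posSemidef_conjTranspose_mul_self L).1.eigenvalues i) : ℝ) : ℂ) := by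
  rw [← cpw_trace_re, Complex.ofReal_one, cpw_one (posSemidef_conjTranspose_mul_self L)]
  have h1 : cpw hA ((2 * s : ℝ) : ℂ) = cpw hA (s : ℂ) * cpw hA (s : ℂ) := by
    rw [cpw_mul]; congr 1; push_cast; ring
  have h2 : cpw hB ((2 * t : ℝ) : ℂ) = cpw hB (t : ℂ) * cpw hB (t : ℂ) := by
    rw [cpw_mul]; congr 1; push_cast; ring
  rw [h1, h2, hL, conjTranspose_mul, cpw_conjTranspose, cpw_conjTranspose]
  simp only [Complex.star_def, Complex.conj_ofReal]
  rw [← Matrix.mul_assoc, Matrix.trace_mul_comm]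
  simp only [Matrix.mul_assoc]

lemma pos_sum {A B : Matrix n n ℂ} (hA : A.PosSemidef) (hB : B.PosSemidef)
    (hAB : A * cpw hB.1 0 = A) (hA0 : A ≠ 0) (s t p : ℝ)
    (L : Matrix n n ℂ) (hL : L = cpw hA.1 (s : ℂ) * cpw hB.1 (t : ℂ)) :
    0 < ∑ i, rpw p ((posSemidef_conjTranspose_mul_self L).1.eigenvalues i) := by
  set hY := posSemidef_conjTranspose_mul_self L
  by_contra hcon
  have hz : ∀ i, hY.1.eigenvalues i = 0 := by
    intro i
    by_contra hne
    have hp : 0 < hY.1.eigenvalues i := lt_of_le_of_ne (hY.eigenvalues_nonneg i) (Ne.symm hne)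
    exact hcon (Finset.sum_pos' (fun _ _ => rpw_nonneg _ _) ⟨i, Finset.mem_univ i, rpw_pos p hp⟩)
  have h0 : Lᴴ * L = 0 := hY.1.eigenvalues_eq_zero_iff.mp (funext hz)
  have hL0 : L = 0 := conjTranspose_mul_self_eq_zero.mp h0
  apply hA0
  have e : cpw hA.1 ((1 - s : ℝ) : ℂ) * L * cpw hB.1 ((-t : ℝ) : ℂ) = A := by
    rw [hL, ← Matrix.mul_assoc, cpw_mul, Matrix.mul_assoc, cpw_mul]
    have a1 : ((1 - s : ℝ) : ℂ) + (s : ℂ) = 1 := by push_cast; ring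
    have a2 : (t : ℂ) + ((-t : ℝ) : ℂ) = 0 := by push_cast; ring
    rw [a1, a2, cpw_one hA, hAB]
  rw [← e, hL0]
  simp

lemma young_a {β : ℝ} (h0 : 0 < β) (h1 : β ≤ 1) (r y : ℝ) (hy : 0 ≤ y) :
    rpw (1 - β) r * y ^ β ≤ (1 - β) * rpw 1 r + β * y := by
  unfold rpw
  split_ifs with h
  · simp; positivity
  · rw [Real.rpow_one]
    exact Real.geom_mean_le_arith_mean2_weighted (by linarith) h0.le (not_le.mp h).le hy (by ring)

lemma young_b {β : ℝ} (h1 : 1 ≤ β) (r y : ℝ) (hy : 0 ≤ y) (hry : r ≤ 0 → y = 0) :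
    (1 - β) * rpw 1 r + β * y ≤ rpw (1 - β) r * y ^ β := by
  have h0 : 0 < β := by linarith
  unfold rpw
  split_ifs with h
  · simp [hry h]
  · have hr := not_le.mp h
    rw [Real.rpow_one]
    have hb : 1 / β ≤ 1 := by rw [div_le_one h0]; exact h1
    have := Real.geom_mean_le_arith_mean2_weighted (w₁ := 1 / β) (w₂ := 1 - 1 / β)
      (p₁ := r ^ (1 - β) * y ^ β) (p₂ := r) (by positivity) (by linarith) (by positivity) hr.le
      (by ring)
    have e : (r ^ (1 - β) * y ^ β) ^ (1 / β) * r ^ (1 - 1 / β) = y := by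
      rw [Real.mul_rpow (by positivity) (by positivity), ← Real.rpow_mul hr.le,
        ← Real.rpow_mul hy]
      have a1 : β * (1 / β) = 1 := by field_simp
      rw [a1, Real.rpow_one, mul_right_comm, ← Real.rpow_add hr]
      have a2 : (1 - β) * (1 / β) + (1 - 1 / β) = 0 := by field_simp; ring
      rw [a2, Real.rpow_zero, one_mul]
    rw [e] at this
    have h3 := mul_le_mul_of_nonneg_left this h0.le
    have e3 : β * (1 / β * (r ^ (1 - β) * y ^ β) + (1 - 1 / β) * r) =
        r ^ (1 - β) * y ^ β + (β - 1) * r := by field_simp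
    rw [e3] at h3
    linarith

lemma sum_weights {ι : Type*} [Fintype ι] (w : ι → ι → ℝ) (hr : ∀ i, ∑ j, w i j = 1)
    (hc : ∀ j, ∑ i, w i j = 1) (f g : ι → ℝ) :
    ∑ i, ∑ j, w i j * (f i + g j) = ∑ i, f i + ∑ j, g j := by
  simp only [mul_add, Finset.sum_add_distrib]
  congr 1
  · refine Finset.sum_congr rfl fun i _ => ?_
    rw [← Finset.sum_mul, hr, one_mul]
  · rw [Finset.sum_comm]
    refine Finset.sum_congr rfl fun i _ => ?_
    rw [← Finset.sum_mul, hc, one_mul]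

/-- Hölder and reverse Hölder step. -/
lemma hoelder_step {A B : Matrix n n ℂ} (hA : A.PosSemidef) (hB : B.IsHermitian)
    (hA1 : A.trace = 1) (α : ℝ) (hα : 0 < α) (s : ℝ) (hs : 2 * s = 1 / α - 1)
    (K : Matrix n n ℂ) (hK : K = cpw hA.1 ((1 / 2 : ℝ) : ℂ) * cpw hB (s : ℂ))
    (T : ℝ) (hT : T = ∑ i, rpw α ((posSemidef_conjTranspose_mul_self K).1.eigenvalues i))
    (hT0 : 0 < T) :
    (1 ≤ α → (cpw hA.1 ((2 - 1 / α : ℝ) : ℂ) * cpw hB ((2 * s : ℝ) : ℂ)).trace.re ≤ T ^ (1 / α)) ∧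
    (α ≤ 1 → T ^ (1 / α) ≤
      (cpw hA.1 ((2 - 1 / α : ℝ) : ℂ) * cpw hB ((2 * s : ℝ) : ℂ)).trace.re) := by
  rw [← swap_sum] at hT
  set β := 1 / α with hβ
  have hβ0 : 0 < β := by positivity
  set hX := posSemidef_self_mul_conjTranspose K
  have hXe : K * Kᴴ = cpw hA.1 ((1 / 2 : ℝ) : ℂ) * cpw hB ((2 * s : ℝ) : ℂ) *
      cpw hA.1 ((1 / 2 : ℝ) : ℂ) := by
    have h2 : cpw hB ((2 * s : ℝ) : ℂ) = cpw hB (s : ℂ) * cpw hB (s : ℂ) := by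
      rw [cpw_mul]; congr 1; push_cast; ring
    rw [h2, hK, conjTranspose_mul, cpw_conjTranspose, cpw_conjTranspose]
    simp only [Complex.star_def, Complex.conj_ofReal, Matrix.mul_assoc]
  have hQ : (cpw hA.1 ((2 - β : ℝ) : ℂ) * cpw hB ((2 * s : ℝ) : ℂ)).trace =
      (cpw hA.1 ((1 - β : ℝ) : ℂ) * cpw hX.1 ((1 : ℝ) : ℂ)).trace := by
    rw [Complex.ofReal_one, cpw_one hX, hXe, ← Matrix.mul_assoc, Matrix.trace_mul_comm _
      (cpw hA.1 ((1 / 2 : ℝ) : ℂ)), ← Matrix.mul_assoc, ← Matrix.mul_assoc, cpw_mul, cpw_mul]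
    congr 3
    push_cast
    ring
  have hsupp : cpw hA.1 ((0 : ℝ) : ℂ) * (K * Kᴴ) = K * Kᴴ := by
    rw [hXe, ← Matrix.mul_assoc, ← Matrix.mul_assoc, cpw_mul]
    simp
  rw [hQ, trace_two, Complex.ofReal_re]
  have hw0 : ∀ i j, hA.1.eigenvalues i ≤ 0 →
      ‖((hA.1.eigenvectorUnitary : Matrix n n ℂ)ᴴ *
        (hX.1.eigenvectorUnitary : Matrix n n ℂ)) i j‖ ^ 2 * hX.1.eigenvalues j = 0 := by
    intro i j hi
    have h1 : cpw hA.1 ((0 : ℝ) : ℂ) * cpw hX.1 1 = cpw hX.1 1 := by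
      rw [cpw_one hX, hsupp]
    have e1 := UhU hA.1
    have e2 := UhU hX.1
    unfold cpw at h1
    set U := (hA.1.eigenvectorUnitary : Matrix n n ℂ)
    set U' := (hX.1.eigenvectorUnitary : Matrix n n ℂ)
    set D := (diagonal fun i => gpow ((0 : ℝ) : ℂ) (hA.1.eigenvalues i)) with hD
    set D' := (diagonal fun i => gpow 1 (hX.1.eigenvalues i)) with hD'
    have h2 : D * ((Uᴴ * U') * D') = (Uᴴ * U') * D' := by
      have h3 := congrArg (fun M => Uᴴ * M * U') h1
      calc D * ((Uᴴ * U') * D') = (Uᴴ * U) * D * ((Uᴴ * U') * D') * (U'ᴴ * U') := by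
            rw [e1, e2, Matrix.one_mul, Matrix.mul_one]
        _ = Uᴴ * (U * D * Uᴴ * (U' * D' * U'ᴴ)) * U' := by simp only [Matrix.mul_assoc]
        _ = Uᴴ * (U' * D' * U'ᴴ) * U' := h3
        _ = Uᴴ * U' * D' * (U'ᴴ * U') := by simp only [Matrix.mul_assoc]
        _ = _ := by rw [e2, Matrix.mul_one]
    have h4 := congrFun (congrFun h2 i) j
    rw [hD, hD', diagonal_mul, mul_diagonal] at h4
    have h5 : gpow ((0 : ℝ) : ℂ) (hA.1.eigenvalues i) = 0 := by unfold gpow; rw [if_pos hi]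
    rw [h5, zero_mul] at h4
    rcases mul_eq_zero.mp h4.symm with h6 | h6
    · rw [h6]; simp
    · have h7 : hX.1.eigenvalues j = 0 := by
        by_contra hne
        have hp : 0 < hX.1.eigenvalues j :=
          lt_of_le_of_ne (hX.eigenvalues_nonneg j) (Ne.symm hne)
        have h8 := norm_gpow 1 (hX.1.eigenvalues j)
        rw [h6, norm_zero] at h8
        exact absurd h8 (rpw_pos _ hp).ne
      rw [h7, mul_zero]
  have hrow := overlap_row hA.1 hX.1
  have hcol := overlap_col hA.1 hX.1
  have hsA : ∑ i, rpw 1 (hA.1.eigenvalues i) = 1 := by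
    have h1 := cpw_trace_re hA.1 1
    rw [Complex.ofReal_one, cpw_one hA, hA1] at h1
    exact_mod_cast h1.symm
  set w : n → n → ℝ := fun i j => ‖((hA.1.eigenvectorUnitary : Matrix n n ℂ)ᴴ *
        (hX.1.eigenvectorUnitary : Matrix n n ℂ)) i j‖ ^ 2 with hw
  have hwn : ∀ i j, 0 ≤ w i j := fun i j => by rw [hw]; positivity
  set r := hA.1.eigenvalues
  set x := hX.1.eigenvalues with hx
  set y : n → ℝ := fun j => rpw α (x j) / T with hy
  have hyn : ∀ j, 0 ≤ y j := fun j => div_nonneg (rpw_nonneg _ _) hT0.le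
  have hys : ∑ j, y j = 1 := by
    rw [hy, ← Finset.sum_div, ← hT, div_self hT0.ne']
  have hxy : ∀ j, rpw 1 (x j) = T ^ β * y j ^ β := by
    intro j
    rw [hy]
    simp only
    rw [Real.div_rpow (rpw_nonneg _ _) hT0.le, mul_div_cancel₀ _ (Real.rpow_pos_of_pos hT0 _).ne']
    unfold rpw
    split_ifs with h
    · rw [Real.zero_rpow hβ0.ne']
    · rw [← Real.rpow_mul (not_le.mp h).le, hβ]
      congr 1
      field_simp
  have hsum : ∑ i, ∑ j, w i j * ((1 - β) * rpw 1 (r i) + β * y j) = 1 := by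
    rw [sum_weights w hrow hcol, ← Finset.mul_sum, ← Finset.mul_sum, hsA, hys]
    ring
  have hmain : ∑ i, ∑ j, w i j * (rpw (1 - β) (r i) * rpw 1 (x j)) =
      T ^ β * ∑ i, ∑ j, w i j * (rpw (1 - β) (r i) * y j ^ β) := by
    simp only [Finset.mul_sum, hxy]
    exact Finset.sum_congr rfl fun i _ => Finset.sum_congr rfl fun j _ => by ring
  have hTb : 0 < T ^ β := Real.rpow_pos_of_pos hT0 _
  constructor
  · intro h1
    have hβ1 : β ≤ 1 := by rw [hβ, div_le_one hα]; exact h1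
    refine hmain.trans_le ?_
    refine mul_le_of_le_one_right hTb.le (le_trans ?_ hsum.le)
    exact Finset.sum_le_sum fun i _ => Finset.sum_le_sum fun j _ =>
      mul_le_mul_of_nonneg_left (young_a hβ0 hβ1 _ _ (hyn j)) (hwn i j)
  · intro h1
    have hβ1 : 1 ≤ β := by rw [hβ, le_div_iff₀ hα]; linarith
    refine le_trans ?_ hmain.symm.le
    refine le_mul_of_one_le_right hTb.le (hsum.symm.le.trans ?_)
    refine Finset.sum_le_sum fun i _ => Finset.sum_le_sum fun j _ => ?_
    by_cases hi : r i ≤ 0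
    · rcases mul_eq_zero.mp (hw0 i j hi) with h2 | h2
      · have h3 : w i j = 0 := h2
        rw [h3]; simp
      · refine mul_le_mul_of_nonneg_left (young_b hβ1 _ _ (hyn j) fun _ => ?_) (hwn i j)
        have h3 : x j = 0 := h2
        have h4 : y j = rpw α (x j) / T := rfl
        rw [h4, h3]
        simp [rpw]
    · exact mul_le_mul_of_nonneg_left (young_b hβ1 _ _ (hyn j) fun h => absurd h hi) (hwn i j)

lemma trFst_eq_sum_s12 {a b : Type*} [Fintype a] (ρ : Matrix (a × b) (a × b) ℂ) :
    trFst ρ = ∑ k, ρ.submatrix (fun j => (k, j)) (fun j => (k, j)) := by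
  ext j j'
  simp [trFst, Matrix.sum_apply]

lemma trFst_posSemidef_s12 {a b : Type*} [Fintype a] [Fintype b]
    {ρ : Matrix (a × b) (a × b) ℂ} (hρ : ρ.PosSemidef) : (trFst ρ).PosSemidef := by
  rw [trFst_eq_sum_s12]
  exact posSemidef_sum _ fun k _ => hρ.submatrix _

lemma kernel_incl {a b : Type*} [Fintype a] [DecidableEq a] [Fintype b] [DecidableEq b]
    {ρ : Matrix (a × b) (a × b) ℂ} (hρ : ρ.PosSemidef) (w : b → ℂ)
    (hw : trFst ρ *ᵥ w = 0) (k : a) :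
    ρ *ᵥ (fun p : a × b => if p.1 = k then w p.2 else 0) = 0 := by
  have h1 : ∑ k, star w ⬝ᵥ (ρ.submatrix (fun j => (k, j)) (fun j => (k, j)) *ᵥ w) = 0 := by
    rw [← dotProduct_sum, ← Matrix.sum_mulVec, ← trFst_eq_sum_s12, hw, dotProduct_zero]
  have h2 := (Finset.sum_eq_zero_iff_of_nonneg
    (fun k _ => (hρ.submatrix (fun j : b => (k, j))).dotProduct_mulVec_nonneg w)).mp h1 k
    (Finset.mem_univ k)
  rw [← hρ.dotProduct_mulVec_zero_iff]
  refine Eq.trans ?_ h2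
  simp only [dotProduct, mulVec, Fintype.sum_prod_type, Pi.star_apply, submatrix_apply]
  rw [Finset.sum_eq_single k]
  · refine Finset.sum_congr rfl fun j _ => ?_
    simp only [if_true]
    congr 1
    rw [Finset.sum_eq_single k]
    · simp
    · intro x _ hx
      simp [hx]
    · simp
  · intro x _ hx
    simp [hx]
  · simp

lemma supp_incl {a b : Type*} [Fintype a] [DecidableEq a] [Fintype b] [DecidableEq b]
    {ρ : Matrix (a × b) (a × b) ℂ} (hρ : ρ.PosSemidef)
    (hσ : ((1 : Matrix a a ℂ) ⊗ₖ trFst ρ).PosSemidef) :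
    ρ * cpw hσ.1 0 = ρ := by
  set σ := (1 : Matrix a a ℂ) ⊗ₖ trFst ρ with hσd
  set M := 1 - cpw hσ.1 0 with hM
  have hσM : σ * M = 0 := by
    rw [hM, Matrix.mul_sub, Matrix.mul_one]
    nth_rewrite 2 [← cpw_one hσ]
    rw [cpw_mul, add_zero, cpw_one hσ, sub_self]
  have hρM : ρ * M = 0 := by
    ext p q
    have hk : ∀ i : a, trFst ρ *ᵥ (fun j => M (i, j) q) = 0 := by
      intro i
      funext j
      have h := congrFun (congrFun hσM (i, j)) q
      rw [Matrix.mul_apply, Fintype.sum_prod_type, Finset.sum_eq_single i] at h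
      · simpa [hσd, mulVec, dotProduct, kroneckerMap_apply] using h
      · intro x _ hx
        refine Finset.sum_eq_zero fun y _ => ?_
        simp [hσd, kroneckerMap_apply, Matrix.one_apply_ne (Ne.symm hx)]
      · simp
    have h1 : ∀ i : a, ∑ j, ρ p (i, j) * M (i, j) q = 0 := by
      intro i
      have h := congrFun (kernel_incl hρ _ (hk i) i) p
      simp only [mulVec, dotProduct, Fintype.sum_prod_type] at h
      rw [Finset.sum_eq_single i] at h
      · simpa using h
      · intro x _ hx
        simp [hx]
      · simp
    rw [Matrix.mul_apply, Fintype.sum_prod_type]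
    simp [h1]
  rw [hM, Matrix.mul_sub, Matrix.mul_one] at hρM
  exact (sub_eq_zero.mp hρM).symm

lemma main_abs {A B : Matrix n n ℂ} (hA : A.PosSemidef) (hB : B.PosSemidef)
    (hA1 : A.trace = 1) (hAB : A * cpw hB.1 0 = A) (α : ℝ) (hα : (1 : ℝ) / 2 ≤ α) (hα1 : α ≠ 1) :
    sandwichedRenyiDiv α A B ≤ renyiDiv α A B ∧
      renyiDiv (2 - 1 / α) A B ≤ sandwichedRenyiDiv α A B := by
  have hα0 : 0 < α := by linarith
  have hA0 : A ≠ 0 := by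
    rintro rfl
    simp at hA1
  set s := (1 - α) / (2 * α) with hs
  set K := cpw hA.1 ((1 / 2 : ℝ) : ℂ) * cpw hB.1 (s : ℂ) with hK
  set L := cpw hA.1 ((α / 2 : ℝ) : ℂ) * cpw hB.1 (((1 - α) / 2 : ℝ) : ℂ) with hL
  have hKK : matRpow B s * A * matRpow B s = Kᴴ * K := by
    rw [matRpow_eq hB, hK, conjTranspose_mul, cpw_conjTranspose, cpw_conjTranspose]
    simp only [Complex.star_def, Complex.conj_ofReal]
    have : A = cpw hA.1 ((1 / 2 : ℝ) : ℂ) * cpw hA.1 ((1 / 2 : ℝ) : ℂ) := by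
      rw [cpw_mul]
      conv_lhs => rw [← cpw_one hA]
      congr 1
      push_cast
      norm_num
    conv_lhs => rw [this]
    simp only [Matrix.mul_assoc]
  set T := ∑ i, rpw α ((posSemidef_conjTranspose_mul_self K).1.eigenvalues i) with hT
  set Q := ∑ i, rpw 1 ((posSemidef_conjTranspose_mul_self L).1.eigenvalues i) with hQ
  have hT0 : 0 < T := pos_sum hA hB hAB hA0 _ _ _ K hK
  have hQ0 : 0 < Q := pos_sum hA hB hAB hA0 _ _ _ L hL
  have eT : sandwichedRenyiDiv α A B = (α - 1)⁻¹ * Real.log T := by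
    unfold sandwichedRenyiDiv
    rw [← hs, hKK, matRpow_eq (posSemidef_conjTranspose_mul_self K), cpw_trace_re,
      Complex.ofReal_re]
  have eQ : renyiDiv α A B = (α - 1)⁻¹ * Real.log Q := by
    unfold renyiDiv
    have h := q_eq hA.1 hB.1 (α / 2) ((1 - α) / 2) L hL
    have a1 : 2 * (α / 2) = α := by ring
    have a2 : 2 * ((1 - α) / 2) = 1 - α := by ring
    rw [a1, a2] at h
    rw [matRpow_eq hA, matRpow_eq hB, h, Complex.ofReal_re]
  set R := (cpw hA.1 ((2 - 1 / α : ℝ) : ℂ) * cpw hB.1 ((2 * s : ℝ) : ℂ)).trace.re with hR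
  have h2s : 2 * s = 1 / α - 1 := by rw [hs]; field_simp
  have eR : renyiDiv (2 - 1 / α) A B = (1 - 1 / α)⁻¹ * Real.log R := by
    unfold renyiDiv
    have a1 : 2 - 1 / α - 1 = 1 - 1 / α := by ring
    have a2 : 1 - (2 - 1 / α) = 2 * s := by rw [h2s]; ring
    rw [a1, a2, matRpow_eq hA, matRpow_eq hB]
  have hR0 : 0 < R := by
    have h := q_eq hA.1 hB.1 ((2 - 1 / α) / 2) s _ rfl
    have a1 : 2 * ((2 - 1 / α) / 2) = 2 - 1 / α := by ring
    rw [a1] at h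
    rw [hR, h, Complex.ofReal_re]
    exact pos_sum hA hB hAB hA0 _ _ _ _ rfl
  obtain ⟨hH1, hH2⟩ := hoelder_step hA hB.1 hA1 α hα0 s h2s K hK T hT hT0
  rw [eT, eQ, eR]
  have hfac : (1 - 1 / α)⁻¹ = (α - 1)⁻¹ * α := by
    have : α - 1 ≠ 0 := sub_ne_zero.mpr hα1
    have h3 : 1 - 1 / α = (α - 1) / α := by field_simp
    rw [h3, inv_div]
    field_simp
  have hlogT : Real.log (T ^ (1 / α)) = 1 / α * Real.log T := Real.log_rpow hT0 _
  have hTa : 0 < T ^ (1 / α) := Real.rpow_pos_of_pos hT0 _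
  rcases lt_or_gt_of_ne hα1 with h | h
  · have hneg : (α - 1)⁻¹ ≤ 0 := inv_nonpos.mpr (by linarith)
    have hQT : Q ≤ T := by
      have := alt_ineq hA.1 hB.1 s (1 / 2) α (2 * α) hα0 h.le (by linarith) L K
        (by rw [hL]; congr 3
            · ring
            · rw [hs]; field_simp) hK
      have a1 : 2 * α / (2 * α) = 1 := by field_simp
      have a2 : 2 * α / 2 = α := by ring
      rwa [a1, a2] at this
    constructor
    · exact mul_le_mul_of_nonpos_left (Real.log_le_log hQ0 hQT) hneg
    · have h5 := Real.log_le_log hTa (hH2 h.le)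
      rw [hlogT] at h5
      rw [hfac, mul_assoc]
      refine mul_le_mul_of_nonpos_left ?_ hneg
      have h6 := mul_le_mul_of_nonneg_left h5 hα0.le
      have h7 : α * (1 / α * Real.log T) = Real.log T := by field_simp
      linarith
  · have hpos : 0 ≤ (α - 1)⁻¹ := inv_nonneg.mpr (by linarith)
    have hTQ : T ≤ Q := by
      have := alt_ineq hA.1 hB.1 ((1 - α) / 2) (α / 2) (1 / α) 2 (by positivity)
        (by rw [div_le_one hα0]; exact h.le) (by norm_num) K L
        (by rw [hK]; congr 3
            · field_simp
            · rw [hs]; field_simp) hL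
      have a1 : 2 / (2 * (1 / α)) = α := by field_simp
      have a2 : (2 : ℝ) / 2 = 1 := by norm_num
      rwa [a1, a2] at this
    constructor
    · exact mul_le_mul_of_nonneg_left (Real.log_le_log hT0 hTQ) hpos
    · have h5 := Real.log_le_log hR0 (hH1 h.le)
      rw [hlogT] at h5
      rw [hfac, mul_assoc]
      refine mul_le_mul_of_nonneg_left ?_ hpos
      have h6 := mul_le_mul_of_nonneg_left h5 hα0.le
      have h7 : α * (1 / α * Real.log T) = Real.log T := by field_simp
      linarith

end Helpers

theorem sandwich_down_down {a b : Type*} [Fintype a] [DecidableEq a] [Fintype b] [DecidableEq b]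
    (ρ : Matrix (a × b) (a × b) ℂ) (hρ : ρ.PosSemidef) (hρ1 : ρ.trace = 1)
    (α : ℝ) (hα : (1 : ℝ) / 2 ≤ α) (hα1 : α ≠ 1) :
    -(renyiDiv α ρ ((1 : Matrix a a ℂ) ⊗ₖ trFst ρ)) ≤
        -(sandwichedRenyiDiv α ρ ((1 : Matrix a a ℂ) ⊗ₖ trFst ρ)) ∧
      -(sandwichedRenyiDiv α ρ ((1 : Matrix a a ℂ) ⊗ₖ trFst ρ)) ≤
        -(renyiDiv (2 - 1 / α) ρ ((1 : Matrix a a ℂ) ⊗ₖ trFst ρ)) := by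

  have hσ : ((1 : Matrix a a ℂ) ⊗ₖ trFst ρ).PosSemidef :=
    Matrix.PosSemidef.kronecker Matrix.PosSemidef.one (trFst_posSemidef_s12 hρ)
  obtain ⟨h1, h2⟩ := main_abs hρ hσ hρ1 (supp_incl hρ hσ) α hα hα1
  exact ⟨neg_le_neg h1, neg_le_neg h2⟩
end
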